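/- arXiv:1707.00038 — 3 statements merged into one kernel-verified Lean document; each statement's English description precedes it below -/
import Mathlib

section
/- Let N ≥ 1, β > 0, I ∈ ℝ, and L, R, γ ≥ 0. Suppose {φ₁, …, φ_N, Q} is a twice continuously differentiable solution of the Josephson junction system with LRC load, and suppose it is a single waveform solution: there exist a running function φ of period T > 0 and numbers 0 = ρ₁ ≤ ρ₂ ≤ … ≤ ρ_N < 1 such that φ_j(t) = φ(t − ρ_j T) for all t and all j = 1, …, N. Then the load current Q̇ satisfies Q̇(t + ρ_j T) = Q̇(t) for every j = 1, …, N and every t ∈ ℝ, and the right-hand side η(t) = (1/N) Σ_{j=1}^N φ̇(t − ρ_j T) of the load equation satisfies η(t + ρ_j T) = η(t) for every j and t. -/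
open Real

/-- `φ` is a running function of period `T`: `φ (t + T) = φ t + 2π` for all `t`. -/
def IsRunning (φ : ℝ → ℝ) (T : ℝ) : Prop :=
  ∀ t : ℝ, φ (t + T) = φ t + 2 * Real.pi

/-- The Josephson junction system with LRC load:
`β φ_k'' + φ_k' + sin (φ_k) + Q' = I` for each junction `k`, together with the load
equation `L Q'' + R Q' + γ Q = (1/N) ∑_j φ_j'`. -/
def JJSystem (N : ℕ) (β I L R γ : ℝ) (φ : Fin N → ℝ → ℝ) (Q : ℝ → ℝ) : Prop :=
  (∀ k : Fin N, ∀ t : ℝ,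
      β * deriv (deriv (φ k)) t + deriv (φ k) t + Real.sin (φ k t) + deriv Q t = I) ∧
  (∀ t : ℝ,
      L * deriv (deriv Q) t + R * deriv Q t + γ * Q t
        = (1 / (N : ℝ)) * ∑ j : Fin N, deriv (φ j) t)

/-!
Shifting the `j`-th junction equation by its delay `τ j` turns it into an equation for the common
waveform in which only `Q'` still depends on `j`; hence every `τ j - τ i` is a period of `Q'`.
Then `Q`, and with it the load equation, changes under that shift by at most an additive constant.
The right-hand side `η` is continuous and `T`-periodic, hence bounded, so iterating the shift shows
that this constant is zero.
-/

open Function Set Bornology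

section Translation

variable {E : Type*} [NormedAddCommGroup E] [NormedSpace ℝ E]

theorem eq_zero_of_isBounded_range_of_add_eq_add_const {G : Type*} [AddMonoid G] {f : G → E}
    {s : G} {c : E} (hf : IsBounded (range f)) (hshift : ∀ t, f (t + s) = f t + c) : c = 0 := by
  obtain ⟨C, hC⟩ := Metric.isBounded_iff.mp hf
  have iterate_shift (n : ℕ) : f (0 + n • s) = f 0 + n • c :=
    AddConstMapClass.map_add_nsmul (⟨f, hshift⟩ : AddConstMap G E s c) 0 n
  have nsmul_norm_le (n : ℕ) : n • ‖c‖ ≤ C := by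
    simpa only [iterate_shift, dist_self_add_left, RCLike.norm_nsmul ℝ] using
      hC (mem_range_self (0 + n • s)) (mem_range_self 0)
  by_contra hc
  obtain ⟨n, hn⟩ := exists_lt_nsmul (norm_pos_iff.mpr hc) C
  exact (nsmul_norm_le n).not_gt hn

theorem periodic_of_continuous_of_add_eq_add_const {f : ℝ → E} {T s : ℝ} {c : E}
    (hf : Continuous f) (hfT : Periodic f T) (hT : T ≠ 0) (hshift : ∀ t, f (t + s) = f t + c) :
    Periodic f s := by
  have hc : c = 0 :=
    eq_zero_of_isBounded_range_of_add_eq_add_const (hfT.isBounded_of_continuous hT hf) hshift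
  simpa [hc] using hshift

theorem periodic_deriv_of_add_eq_add_const {f : ℝ → E} {s : ℝ} {c : E}
    (hshift : ∀ t, f (t + s) = f t + c) : Periodic (deriv f) s := fun t ↦
  calc deriv f (t + s) = deriv (fun u ↦ f (u + s)) t := (deriv_comp_add_const f s t).symm
    _ = deriv (fun u ↦ f u + c) t := by simp only [hshift]
    _ = deriv f t := deriv_add_const c

theorem exists_add_eq_add_const_of_periodic_deriv {f : ℝ → E} {s : ℝ} (hf : Differentiable ℝ f)
    (hs : Periodic (deriv f) s) : ∃ c, ∀ t, f (t + s) = f t + c := by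
  have hdiff : Differentiable ℝ fun t ↦ f (t + s) - f t := by fun_prop
  have hderiv (t : ℝ) : deriv (fun u ↦ f (u + s) - f u) t = 0 := by
    rw [deriv_fun_sub (by fun_prop) (by fun_prop), deriv_comp_add_const, hs t, sub_self]
  exact ⟨f (0 + s) - f 0, fun t ↦
    sub_eq_iff_eq_add'.mp (is_const_of_deriv_eq_zero hdiff hderiv t 0)⟩

theorem exists_lrc_add_eq_add_const_of_periodic_deriv {Q : ℝ → ℝ} {s : ℝ}
    (hQ : Differentiable ℝ Q) (hs : Periodic (deriv Q) s) (L R γ : ℝ) :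
    ∃ c, ∀ t, L * deriv (deriv Q) (t + s) + R * deriv Q (t + s) + γ * Q (t + s)
      = L * deriv (deriv Q) t + R * deriv Q t + γ * Q t + c := by
  have hs' : Periodic (deriv (deriv Q)) s :=
    periodic_deriv_of_add_eq_add_const (c := 0) (by simpa using hs)
  obtain ⟨c, hc⟩ := exists_add_eq_add_const_of_periodic_deriv hQ hs
  exact ⟨γ * c, fun t ↦ by rw [hs' t, hs t, hc t]; ring⟩

end Translation

namespace IsRunning

variable {φ : ℝ → ℝ} {T : ℝ}

theorem period_ne_zero (h : IsRunning φ T) : T ≠ 0 := by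
  rintro rfl
  simpa [Real.pi_ne_zero] using h 0

theorem periodic_deriv (h : IsRunning φ T) : Periodic (deriv φ) T :=
  periodic_deriv_of_add_eq_add_const h

end IsRunning

/-- The right-hand side `η` of the load equation when the `i`-th junction carries the waveform `φ`
delayed by `τ i`. The delays are absolute times, `τ i = ρ i * T` in terms of phases `ρ i`. -/
noncomputable def loadDrive {N : ℕ} (φ : ℝ → ℝ) (τ : Fin N → ℝ) (t : ℝ) : ℝ :=
  (1 / (N : ℝ)) * ∑ i : Fin N, deriv φ (t - τ i)

section Waveform

variable {N : ℕ} {β I L R γ T : ℝ} {φ Q : ℝ → ℝ} {τ : Fin N → ℝ}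

theorem continuous_loadDrive (hφ : Continuous (deriv φ)) (τ : Fin N → ℝ) :
    Continuous (loadDrive φ τ) := by
  unfold loadDrive
  fun_prop

theorem periodic_loadDrive (hφ : Periodic (deriv φ) T) (τ : Fin N → ℝ) :
    Periodic (loadDrive φ τ) T := fun t ↦ by
  simp only [loadDrive, add_sub_right_comm, hφ _]

namespace JJSystem

theorem waveform_equation (h : JJSystem N β I L R γ (fun j t ↦ φ (t - τ j)) Q) (j : Fin N)
    (t : ℝ) :
    β * deriv (deriv φ) t + deriv φ t + Real.sin (φ t) + deriv Q (t + τ j) = I := by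
  simpa only [funext fun u ↦ deriv_comp_sub_const φ (τ j) u, deriv_comp_sub_const,
    add_sub_cancel_right] using h.1 j (t + τ j)

theorem load_equation (h : JJSystem N β I L R γ (fun j t ↦ φ (t - τ j)) Q) (t : ℝ) :
    L * deriv (deriv Q) t + R * deriv Q t + γ * Q t = loadDrive φ τ t := by
  simpa only [loadDrive, deriv_comp_sub_const] using h.2 t

theorem periodic_deriv_load (h : JJSystem N β I L R γ (fun j t ↦ φ (t - τ j)) Q) (i j : Fin N) :
    Periodic (deriv Q) (τ j - τ i) := fun t ↦ by
  have hi := h.waveform_equation i (t - τ i)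
  have hj := h.waveform_equation j (t - τ i)
  rw [sub_add_cancel] at hi
  rw [sub_add_eq_add_sub, add_sub_assoc] at hj
  linarith

theorem periodic_loadDrive_of_isRunning (h : JJSystem N β I L R γ (fun j t ↦ φ (t - τ j)) Q)
    (hQ : Differentiable ℝ Q) (hφ : Continuous (deriv φ)) (hrun : IsRunning φ T) (i j : Fin N) :
    Periodic (loadDrive φ τ) (τ j - τ i) := by
  obtain ⟨c, hc⟩ :=
    exists_lrc_add_eq_add_const_of_periodic_deriv hQ (h.periodic_deriv_load i j) L R γ
  refine periodic_of_continuous_of_add_eq_add_const (continuous_loadDrive hφ τ)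
    (periodic_loadDrive hrun.periodic_deriv τ) hrun.period_ne_zero (c := c) fun t ↦ ?_
  simpa only [h.load_equation] using hc t

end JJSystem

end Waveform

theorem swfs_load_current_periods_general {N : ℕ} {β I L R γ T : ℝ} {φfam : Fin N → ℝ → ℝ}
    {φ Q : ℝ → ℝ} {τ : Fin N → ℝ} (hsmooth : ∀ k, ContDiff ℝ 2 (φfam k))
    (hQsmooth : ContDiff ℝ 2 Q) (hsys : JJSystem N β I L R γ φfam Q) (hrun : IsRunning φ T)
    (hswfs : ∀ j t, φfam j t = φ (t - τ j)) (i : Fin N) :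
    (∀ j, Periodic (deriv Q) (τ j - τ i)) ∧ ∀ j, Periodic (loadDrive φ τ) (τ j - τ i) := by
  obtain rfl : φfam = fun j t ↦ φ (t - τ j) := funext₂ hswfs
  have hφ : ContDiff ℝ 2 φ := by
    simpa [comp_def] using (hsmooth i).comp (contDiff_id.add (contDiff_const (c := τ i)))
  exact ⟨hsys.periodic_deriv_load i, hsys.periodic_loadDrive_of_isRunning
    (hQsmooth.differentiable two_ne_zero) (hφ.continuous_deriv one_le_two) hrun i⟩

/-- For a single waveform solution of the Josephson junction system with LRC load,
the load current `Q'` and the right-hand side `η` of the load equation have each of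
the delays `ρ j * T` as a period. -/
theorem swfs_load_current_periods (N : ℕ) (hN : 1 ≤ N)
    (β I L R γ : ℝ) (hβ : 0 < β) (hL : 0 ≤ L) (hR : 0 ≤ R) (hγ : 0 ≤ γ)
    (φfam : Fin N → ℝ → ℝ) (Q : ℝ → ℝ)
    (hsmooth : ∀ k : Fin N, ContDiff ℝ 2 (φfam k)) (hQsmooth : ContDiff ℝ 2 Q)
    (hsys : JJSystem N β I L R γ φfam Q)
    (φ : ℝ → ℝ) (T : ℝ) (hT : 0 < T) (hrun : IsRunning φ T)
    (ρ : Fin N → ℝ)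
    (hρ0 : ρ ⟨0, hN⟩ = 0) (hρmono : Monotone ρ)
    (hρnonneg : ∀ j, 0 ≤ ρ j) (hρlt : ∀ j, ρ j < 1)
    (hswfs : ∀ j : Fin N, ∀ t : ℝ, φfam j t = φ (t - ρ j * T)) :
    (∀ j : Fin N, ∀ t : ℝ, deriv Q (t + ρ j * T) = deriv Q t) ∧
    (∀ j : Fin N, ∀ t : ℝ,
      (1 / (N : ℝ)) * ∑ i : Fin N, deriv φ (t + ρ j * T - ρ i * T)
        = (1 / (N : ℝ)) * ∑ i : Fin N, deriv φ (t - ρ i * T)) := by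
  simpa only [hρ0, zero_mul, sub_zero, Periodic, loadDrive] using
    swfs_load_current_periods_general (τ := fun j ↦ ρ j * T) hsmooth hQsmooth hsys hrun hswfs
      ⟨0, hN⟩
end

section
/- (Theorem 1, Aronson–Huang) Let N ≥ 1 and let M be a divisor of N with l = N/M. Assume I > 1, β > 0, R ≥ 0, L ≥ 0, γ ≥ 0 with R + γ > 0. Then there exist T > 0, a running function φ of period T, and a twice continuously differentiable function Q with Q' periodic of period T/M, such that β φ'' + φ' + sin(φ) + Q' = I and L Q'' + R Q' + γ Q = (l/N) Σ_{j=1}^{M} φ'(t − (j−1)T/M) for all t; that is, setting φ_j(t) = φ(t − hT/M) for j = hl+1, …, (h+1)l and h = 0, 1, …, M−1, the tuple {φ₁, …, φ_N, Q} is an (l, M, N) single waveform solution of the Josephson junction system with LRC load. -/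
open Real

/-!
The phase is sought in the form `φ t = Ω t + u (Ω t)` and the charge as an affine function plus
`q (Ω t)`, with `u` and `q` real `2π`-periodic trigonometric series. Averaging `φ'` over the `M`
shifts of `T / M` keeps exactly the harmonics divisible by `M`, so every linear term acts on Fourier
coefficients as a multiplier. Writing `σ` for the coefficients of `sin φ`, the multipliers express
`u` and `q` through `σ`, and the mean of the junction equation gives `Ω` through `σ 0`. What remains
is a fixed-point equation for `σ`, the coefficients of `sin (θ + u θ)`, on a polydisc on which
`I > 1` bounds `Ω` away from `0`.

The multiplier from `σ` to `u` then decays like `k⁻²`, uniformly in `Ω`, which makes the fixed-point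
map continuous for pointwise convergence of coefficients. Brouwer's theorem solves every finite
truncation, and compactness of the polydisc passes to the limit. The same decay bootstraps the
smoothness of the solution.

Brouwer's theorem is proved analytically: for a `C¹` retraction `id + h` onto the sphere, the
integral over the ball of the Jacobian of `id + t h` is a polynomial in `t`, equal to the volume of
the ball for small `t` yet zero at `t = 1`.
-/

section VolumePreservation

open MeasureTheory Metric Set Polynomial
open scoped NNReal

variable {E : Type*} [NormedAddCommGroup E] [NormedSpace ℝ E]

lemma approximatesLinearOn_id_of_norm_fderiv_sub_id_le {g : E → E} {s : Set E} {c : ℝ≥0}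
    (hs : Convex ℝ s) (hg : ∀ x ∈ s, DifferentiableAt ℝ g x)
    (hc : ∀ x ∈ s, ‖fderiv ℝ g x - ContinuousLinearMap.id ℝ E‖ ≤ c) :
    ApproximatesLinearOn g (ContinuousLinearMap.id ℝ E) s c :=
  fun _ hx _ hy => hs.norm_image_sub_le_of_norm_fderiv_le' hg hc hy hx

lemma subsingleton_or_lt_inv_nnnorm_refl_symm {c : ℝ≥0} (hc : c < 1) : Subsingleton E ∨
    c < ‖((ContinuousLinearEquiv.refl ℝ E).symm : E →L[ℝ] E)‖₊⁻¹ := by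
  rcases subsingleton_or_nontrivial E with hE | hE
  · exact Or.inl hE
  · right
    have hid : ‖((ContinuousLinearEquiv.refl ℝ E).symm : E →L[ℝ] E)‖₊ = 1 :=
      NNReal.eq ContinuousLinearMap.norm_id
    rwa [hid, inv_one]

lemma injOn_of_approximatesLinearOn_id {g : E → E} {s : Set E} {c : ℝ≥0}
    (happrox : ApproximatesLinearOn g (ContinuousLinearMap.id ℝ E) s c) (hc : c < 1) :
    InjOn g s :=
  ApproximatesLinearOn.injOn (f' := ContinuousLinearEquiv.refl ℝ E) happrox
    (subsingleton_or_lt_inv_nnnorm_refl_symm hc)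

variable [FiniteDimensional ℝ E]

lemma exists_polynomial_eval_eq_det_id_add_smul (A : E →L[ℝ] E) :
    ∃ p : ℝ[X], p.natDegree ≤ Module.finrank ℝ E ∧
      ∀ t : ℝ, (ContinuousLinearMap.id ℝ E + t • A).det = p.eval t := by
  classical
  let b := Module.finBasis ℝ E
  let m := LinearMap.toMatrix b b (A : E →ₗ[ℝ] E)
  refine ⟨Matrix.det ((X : ℝ[X]) • m.map C + (1 : Matrix _ _ ℝ).map C), ?_, fun t => ?_⟩
  · simpa only [Fintype.card_fin] using
      Polynomial.natDegree_det_X_add_C_le m (1 : Matrix _ _ ℝ)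
  · have hmatrix : LinearMap.toMatrix b b
        (ContinuousLinearMap.id ℝ E + t • A : E →L[ℝ] E) = t • m + 1 := by
      rw [ContinuousLinearMap.toLinearMap_add, ContinuousLinearMap.toLinearMap_smul,
        ContinuousLinearMap.coe_id, map_add, map_smul, LinearMap.toMatrix_id, add_comm]
    rw [ContinuousLinearMap.det, ← LinearMap.det_toMatrix b, hmatrix,
      ← Polynomial.coe_evalRingHom, RingHom.map_det]
    congr 1
    ext i j
    rcases eq_or_ne i j with rfl | hij
    · simpa using mul_comm t (m i i)
    · simpa [hij] using mul_comm t (m i j)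

lemma exists_polynomial_eval_eq_integral_det {α : Type*} [MeasurableSpace α] {μ : Measure α}
    {A : α → E →L[ℝ] E}
    (hA : ∀ t : ℝ, Integrable (fun x => (ContinuousLinearMap.id ℝ E + t • A x).det) μ) :
    ∃ p : ℝ[X], ∀ t : ℝ,
      ∫ x, (ContinuousLinearMap.id ℝ E + t • A x).det ∂μ = p.eval t := by
  let s := Finset.range (Module.finrank ℝ E + 1)
  let node : ℕ → ℝ := Nat.cast
  have det_eq_sum : ∀ x (t : ℝ), (ContinuousLinearMap.id ℝ E + t • A x).det =
      ∑ i ∈ s, (ContinuousLinearMap.id ℝ E + node i • A x).det *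
        (Lagrange.basis s node i).eval t := by
    intro x t
    obtain ⟨p, hdeg, hp⟩ := exists_polynomial_eval_eq_det_id_add_smul (A x)
    have hcard : p.degree < s.card := by
      rw [Finset.card_range]
      exact degree_le_natDegree.trans_lt (by exact_mod_cast Nat.lt_succ_of_le hdeg)
    simp only [hp]
    conv_lhs => rw [Lagrange.eq_interpolate Nat.cast_injective.injOn hcard]
    simp only [Lagrange.interpolate_apply, eval_finsetSum, eval_mul, eval_C, node]
  refine ⟨Lagrange.interpolate s node
    fun i => ∫ x, (ContinuousLinearMap.id ℝ E + node i • A x).det ∂μ, fun t => ?_⟩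
  simp only [det_eq_sum _ t, Lagrange.interpolate_apply, eval_finsetSum, eval_mul, eval_C]
  rw [integral_finsetSum _ fun i _ => (hA (node i)).mul_const _]
  simp only [integral_mul_const]

lemma det_id_add_pos_of_norm_lt_one {A : E →L[ℝ] E} (hA : ‖A‖ < 1) :
    0 < (ContinuousLinearMap.id ℝ E + A).det := by
  have det_ne_zero : ∀ s ∈ Icc (0 : ℝ) 1, (ContinuousLinearMap.id ℝ E + s • A).det ≠ 0 := by
    intro s hs
    have hnorm : ‖-(s • A)‖ < 1 := by
      rw [norm_neg, norm_smul, Real.norm_of_nonneg hs.1]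
      exact (mul_le_of_le_one_left (norm_nonneg A) hs.2).trans_lt hA
    have hunit : IsUnit (1 + s • A) := by
      rw [← sub_neg_eq_add]
      exact isUnit_one_sub_of_norm_lt_one hnorm
    exact ((hunit.map ContinuousLinearMap.toLinearMapRingHom).map LinearMap.det).ne_zero
  have hcont : Continuous fun s : ℝ => (ContinuousLinearMap.id ℝ E + s • A).det :=
    ContinuousLinearMap.continuous_det.comp (by fun_prop)
  by_contra! hneg
  obtain ⟨s, hs, hs0⟩ := intermediate_value_Icc' zero_le_one hcont.continuousOn
    (show (0 : ℝ) ∈ Icc _ _ from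
      ⟨by simpa only [one_smul] using hneg, by simp [ContinuousLinearMap.det]⟩)
  exact det_ne_zero s hs hs0

section ApproximatesIdentity

variable {g : E → E} {x₀ : E} {R : ℝ} {c : ℝ≥0}

lemma image_ball_eq_of_approximatesLinearOn_id
    (happrox : ApproximatesLinearOn g (ContinuousLinearMap.id ℝ E) (ball x₀ R) c) (hc : c < 1)
    (hcont : ContinuousOn g (closedBall x₀ R)) (hball : MapsTo g (ball x₀ R) (ball x₀ R))
    (hsphere : MapsTo g (sphere x₀ R) (sphere x₀ R)) :
    g '' ball x₀ R = ball x₀ R := by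
  rcases (ball x₀ R).eq_empty_or_nonempty with hempty | ⟨x, hx⟩
  · rw [hempty, image_empty]
  refine hball.image_subset.antisymm ?_
  have hopen : IsOpen (g '' ball x₀ R) :=
    ApproximatesLinearOn.open_image (f' := (ContinuousLinearEquiv.refl ℝ E : E →L[ℝ] E))
      happrox (ContinuousLinearEquiv.refl ℝ E).toNonlinearRightInverse isOpen_ball
      (subsingleton_or_lt_inv_nnnorm_refl_symm hc)
  have hclosure : closure (g '' ball x₀ R) ⊆ g '' closedBall x₀ R :=
    closure_minimal (image_mono ball_subset_closedBall)
      ((isCompact_closedBall x₀ R).image_of_continuousOn hcont).isClosed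
  refine (convex_ball x₀ R).isPreconnected.subset_of_closure_inter_subset hopen
    ⟨g x, hball hx, mem_image_of_mem g hx⟩ ?_
  rintro _ ⟨hy, hyball⟩
  obtain ⟨z, hz, rfl⟩ := hclosure hy
  rcases (mem_closedBall.1 hz).lt_or_eq with hlt | heq
  · exact mem_image_of_mem g hlt
  · exact absurd (hsphere heq) (mem_ball.1 hyball).ne

variable [MeasurableSpace E] [BorelSpace E] (μ : Measure E) [μ.IsAddHaarMeasure]

lemma setIntegral_ball_det_fderiv_eq_of_norm_sub_id_le (hg : Differentiable ℝ g)
    (hbound : ∀ x ∈ ball x₀ R, ‖fderiv ℝ g x - ContinuousLinearMap.id ℝ E‖ ≤ c) (hc : c < 1)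
    (hball : MapsTo g (ball x₀ R) (ball x₀ R)) (hsphere : MapsTo g (sphere x₀ R) (sphere x₀ R)) :
    ∫ x in ball x₀ R, (fderiv ℝ g x).det ∂μ = μ.real (ball x₀ R) := by
  have happrox := approximatesLinearOn_id_of_norm_fderiv_sub_id_le (convex_ball x₀ R)
    (fun x _ => hg x) hbound
  have change_of_variables := integral_image_eq_integral_abs_det_fderiv_smul μ
    (measurableSet_ball (x := x₀) (ε := R)) (fun x _ => (hg x).hasFDerivAt.hasFDerivWithinAt)
    (injOn_of_approximatesLinearOn_id happrox hc) (fun _ => (1 : ℝ))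
  rw [image_ball_eq_of_approximatesLinearOn_id happrox hc hg.continuous.continuousOn hball
    hsphere, setIntegral_const, smul_eq_mul, mul_one] at change_of_variables
  rw [change_of_variables]
  refine setIntegral_congr_fun measurableSet_ball fun x hx => ?_
  have hdet : 0 < (fderiv ℝ g x).det := by
    simpa only [add_sub_cancel] using
      det_id_add_pos_of_norm_lt_one ((hbound x hx).trans_lt (NNReal.coe_lt_one.2 hc))
  simp only [smul_eq_mul, mul_one, abs_of_pos hdet]

end ApproximatesIdentity

section Retraction

variable [MeasurableSpace E] [BorelSpace E] (μ : Measure E) [μ.IsAddHaarMeasure]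
variable {r : E → E} {R : ℝ}

lemma setIntegral_ball_det_id_add_smul_eq_of_small (hr : Differentiable ℝ r)
    (hball : MapsTo r (ball 0 R) (closedBall 0 R)) (hsphere : EqOn r id (sphere 0 R))
    {c : ℝ≥0} (hc : ∀ x ∈ ball (0 : E) R, ‖fderiv ℝ r x - ContinuousLinearMap.id ℝ E‖ ≤ c)
    {t : ℝ} (ht : t ∈ Ico 0 1) (htc : t * c < 1) :
    ∫ x in ball (0 : E) R, (ContinuousLinearMap.id ℝ E +
        t • (fderiv ℝ r x - ContinuousLinearMap.id ℝ E)).det ∂μ = μ.real (ball 0 R) := by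
  let g : E → E := fun x => x + t • (r x - x)
  have hg : ∀ x, HasFDerivAt g (ContinuousLinearMap.id ℝ E +
      t • (fderiv ℝ r x - ContinuousLinearMap.id ℝ E)) x := fun x =>
    (hasFDerivAt_id x).add (((hr x).hasFDerivAt.sub (hasFDerivAt_id x)).const_smul t)
  have hg_ball : MapsTo g (ball 0 R) (ball 0 R) := by
    intro x hx
    have hrx := mem_closedBall_zero_iff.1 (hball hx)
    rw [mem_ball_zero_iff] at hx ⊢
    calc ‖g x‖ = ‖(1 - t) • x + t • r x‖ := by congr 1; simp only [g]; module
      _ ≤ (1 - t) * ‖x‖ + t * ‖r x‖ := by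
        refine (norm_add_le _ _).trans_eq ?_
        rw [norm_smul, norm_smul, Real.norm_of_nonneg ht.1,
          Real.norm_of_nonneg (sub_nonneg.2 ht.2.le)]
      _ < R := by nlinarith [ht.1, ht.2]
  have hg_sphere : MapsTo g (sphere 0 R) (sphere 0 R) := by
    intro x hx
    have hgx : g x = x := by simp only [g, hsphere hx, id, sub_self, smul_zero, add_zero]
    rwa [hgx]
  simp only [← fun x => (hg x).fderiv]
  refine setIntegral_ball_det_fderiv_eq_of_norm_sub_id_le (c := ⟨t * c, mul_nonneg ht.1 c.2⟩) μ
    (fun x => (hg x).differentiableAt) (fun x hx => ?_) htc hg_ball hg_sphere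
  rw [(hg x).fderiv, add_sub_cancel_left, norm_smul, Real.norm_of_nonneg ht.1]
  exact mul_le_mul_of_nonneg_left (hc x hx) ht.1

lemma setIntegral_ball_det_fderiv_eq_of_eqOn_sphere (hr : ContDiff ℝ 1 r)
    (hball : MapsTo r (ball 0 R) (closedBall 0 R)) (hsphere : EqOn r id (sphere 0 R)) :
    ∫ x in ball (0 : E) R, (fderiv ℝ r x).det ∂μ = μ.real (ball 0 R) := by
  have hcont : Continuous fun x => fderiv ℝ r x - ContinuousLinearMap.id ℝ E :=
    (hr.continuous_fderiv one_ne_zero).sub continuous_const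
  obtain ⟨c, hc⟩ := (isCompact_closedBall (0 : E) R).exists_bound_of_continuousOn
    hcont.continuousOn
  have hint : ∀ t : ℝ, IntegrableOn (fun x => (ContinuousLinearMap.id ℝ E +
      t • (fderiv ℝ r x - ContinuousLinearMap.id ℝ E)).det) (ball 0 R) μ := fun t =>
    ((ContinuousLinearMap.continuous_det.comp (by fun_prop)).continuousOn.integrableOn_compact
      (isCompact_closedBall 0 R)).mono_set ball_subset_closedBall
  obtain ⟨p, hp⟩ := exists_polynomial_eval_eq_integral_det hint
  have hsmall : ∀ t ∈ Ioo 0 (|c| + 1)⁻¹, p.eval t = (C (μ.real (ball (0 : E) R))).eval t := by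
    intro t ht
    have hlt : t * (|c| + 1) < 1 := (lt_inv_mul_iff₀' (by positivity)).1 (by simpa using ht.2)
    rw [← hp, eval_C]
    exact setIntegral_ball_det_id_add_smul_eq_of_small (c := ‖c‖₊) μ (hr.differentiable one_ne_zero)
      hball hsphere (fun x hx => (hc x (ball_subset_closedBall hx)).trans (le_abs_self c))
      ⟨ht.1.le, by nlinarith [ht.1, abs_nonneg c]⟩
      (by rw [coe_nnnorm, Real.norm_eq_abs]; nlinarith [ht.1])
  have hconst : p = C (μ.real (ball (0 : E) R)) :=
    eq_of_infinite_eval_eq _ _ ((Ioo_infinite (by positivity)).mono hsmall)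
  simpa [hconst] using hp 1

end Retraction

end VolumePreservation

section Brouwer

open MeasureTheory Metric Set

section InnerProductSpace

variable {E : Type*} [NormedAddCommGroup E] [InnerProductSpace ℝ E] [FiniteDimensional ℝ E]

lemma det_fderiv_eq_zero_of_norm_eq {r : E → E} {R : ℝ} (hR : R ≠ 0) (hr : Differentiable ℝ r)
    (hnorm : ∀ x, ‖r x‖ = R) (x : E) : (fderiv ℝ r x).det = 0 := by
  by_contra hdet
  have hsurj : Function.Surjective (fderiv ℝ r x) :=
    ((Module.End.isUnit_iff _).1 ((LinearMap.isUnit_iff_isUnit_det _).2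
      (isUnit_iff_ne_zero.2 hdet))).2
  obtain ⟨y, hy⟩ := hsurj (r x)
  have hderiv : HasFDerivAt (fun z => ‖r z‖ ^ 2) _ x := (hr x).hasFDerivAt.norm_sq
  simp only [hnorm] at hderiv
  have happly := DFunLike.congr_fun (hderiv.unique (hasFDerivAt_const (R ^ 2) x)) y
  simp [hy, hnorm, hR] at happly

lemma not_contDiff_retraction_onto_sphere {r : E → E} {R : ℝ} (hR : 0 < R)
    (hnorm : ∀ x, ‖r x‖ = R) (hsphere : EqOn r id (sphere 0 R)) : ¬ ContDiff ℝ 1 r := by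
  intro hr
  borelize E
  have hvolume := setIntegral_ball_det_fderiv_eq_of_eqOn_sphere volume hr
    (fun x _ => mem_closedBall_zero_iff.2 (hnorm x).le) hsphere
  simp only [det_fderiv_eq_zero_of_norm_eq hR.ne' (hr.differentiable one_ne_zero) hnorm,
    integral_zero] at hvolume
  exact (ENNReal.toReal_pos (measure_ball_pos volume (0 : E) hR).ne'
    measure_ball_lt_top.ne).ne hvolume

lemma exists_eq_of_contDiff_of_norm_le_inner {p : E → E} (hp : ContDiff ℝ 1 p) {R : ℝ}
    (hR : ∀ x, ‖p x‖ ≤ R) : ∃ x, p x = x := by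
  have hR0 : 0 ≤ R := (norm_nonneg _).trans (hR 0)
  by_contra! hfix
  let χ : ContDiffBump (0 : E) := ⟨R + 1, R + 2, by linarith, by linarith⟩
  let g : E → E := fun x => x - χ x • p x
  have hg : ContDiff ℝ 1 g := contDiff_id.sub (χ.contDiff.smul hp)
  have hg_ne : ∀ x, g x ≠ 0 := by
    intro x hx
    have hx_eq : x = χ x • p x := sub_eq_zero.1 hx
    have hx_norm : ‖x‖ ≤ R := by
      rw [hx_eq, norm_smul, Real.norm_of_nonneg χ.nonneg]
      exact (mul_le_of_le_one_left (norm_nonneg _) χ.le_one).trans (hR x)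
    have hχ : χ x = 1 := χ.one_of_mem_closedBall <| mem_closedBall_zero_iff.2 <|
      hx_norm.trans (le_add_of_nonneg_right zero_le_one)
    rw [hχ, one_smul] at hx_eq
    exact hfix x hx_eq.symm
  refine not_contDiff_retraction_onto_sphere (r := fun x => ((R + 2) / ‖g x‖) • g x)
    (by linarith : 0 < R + 2) (fun x => ?_) (fun x hx => ?_)
    ((contDiff_const.div (hg.norm ℝ hg_ne) fun x => norm_ne_zero_iff.2 (hg_ne x)).smul hg)
  · rw [norm_smul, norm_div, norm_norm, Real.norm_of_nonneg (by linarith : 0 ≤ R + 2),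
      div_mul_cancel₀ _ (norm_ne_zero_iff.2 (hg_ne x))]
  · have hx_norm : ‖x‖ = R + 2 := mem_sphere_zero_iff_norm.1 hx
    have hχ : χ x = 0 := χ.zero_of_le_dist (by rw [dist_zero_right]; exact hx_norm.ge)
    have hgx : g x = x := by simp only [g, hχ, zero_smul, sub_zero]
    simp only [hgx, hx_norm, div_self (by linarith : R + 2 ≠ 0), one_smul, id]

end InnerProductSpace

section NormedSpace

variable {E : Type*} [NormedAddCommGroup E] [NormedSpace ℝ E] [FiniteDimensional ℝ E]

lemma exists_eq_of_contDiff_of_norm_le {p : E → E} (hp : ContDiff ℝ 1 p) {R : ℝ}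
    (hR : ∀ x, ‖p x‖ ≤ R) : ∃ x, p x = x := by
  let e : E ≃L[ℝ] EuclideanSpace ℝ (Fin (Module.finrank ℝ E)) := toEuclidean
  let e' : E →L[ℝ] EuclideanSpace ℝ (Fin (Module.finrank ℝ E)) := e
  obtain ⟨y, hy⟩ := exists_eq_of_contDiff_of_norm_le_inner (p := e ∘ p ∘ e.symm)
    (e.contDiff.comp (hp.comp e.symm.contDiff)) (R := ‖e'‖ * R)
    fun y => e'.le_opNorm_of_le (hR (e.symm y))
  exact ⟨e.symm y, e.injective (by simpa using hy)⟩

theorem exists_eq_of_continuous_of_norm_le {f : E → E} (hf : Continuous f) {R : ℝ}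
    (hR : ∀ x, ‖f x‖ ≤ R) : ∃ x, f x = x := by
  have approx : ∀ ε > 0, ∃ p : E → E, ContDiff ℝ 1 p ∧ ∀ x, ‖p x - f x‖ ≤ ε := by
    intro ε hε
    obtain ⟨p, hp, hpf, -⟩ := hf.exists_contDiff_approx 1 (ε := fun _ => ε) continuous_const
      fun _ => hε
    exact ⟨p, hp, fun x => by rw [← dist_eq_norm]; exact (hpf x).le⟩
  have approx_fixed : ∀ ε ∈ Ioc (0 : ℝ) 1, ∃ x ∈ closedBall (0 : E) (R + 1), ‖x - f x‖ ≤ ε := by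
    intro ε hε
    obtain ⟨p, hp, hpf⟩ := approx ε hε.1
    have hp_norm : ∀ x, ‖p x‖ ≤ R + 1 := fun x => by
      linarith [norm_le_norm_add_norm_sub' (p x) (f x), hpf x, hR x, hε.2]
    obtain ⟨x, hx⟩ := exists_eq_of_contDiff_of_norm_le hp hp_norm
    refine ⟨x, mem_closedBall_zero_iff.2 ?_, ?_⟩
    · rw [← hx]; exact hp_norm x
    · conv_lhs => enter [1, 1]; rw [← hx]
      exact hpf x
  obtain ⟨x, -, hmin⟩ := (isCompact_closedBall (0 : E) (R + 1)).exists_isMinOn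
    (nonempty_closedBall.2 (by linarith [norm_nonneg (f 0), hR 0]))
    (f := fun x => ‖x - f x‖) (by fun_prop)
  refine ⟨x, ?_⟩
  by_contra hne
  have hpos : 0 < ‖x - f x‖ := norm_pos_iff.2 (sub_ne_zero.2 (Ne.symm hne))
  obtain ⟨y, hy, hyε⟩ := approx_fixed (min 1 (‖x - f x‖ / 2)) ⟨by positivity, min_le_left _ _⟩
  have hxy : ‖x - f x‖ ≤ ‖y - f y‖ := hmin hy
  linarith [min_le_right 1 (‖x - f x‖ / 2)]

end NormedSpace

section RadialClamp

variable {V : Type*} [NormedAddCommGroup V] [NormedSpace ℝ V]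

/-- Projection along rays onto the closed ball of radius `r` around the origin. -/
noncomputable def radialClamp (r : ℝ) (x : V) : V :=
  (r / max r ‖x‖) • x

variable {r : ℝ}

lemma continuous_radialClamp (hr : 0 < r) : Continuous (radialClamp r : V → V) :=
  (continuous_const.div (by fun_prop) fun x => (lt_max_of_lt_left hr).ne').smul continuous_id

lemma norm_radialClamp_le (hr : 0 < r) (x : V) : ‖radialClamp r x‖ ≤ r := by
  have hmax : 0 < max r ‖x‖ := lt_max_of_lt_left hr
  rw [radialClamp, norm_smul, Real.norm_of_nonneg (by positivity), div_mul_eq_mul_div,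
    div_le_iff₀ hmax]
  exact mul_le_mul_of_nonneg_left (le_max_right _ _) hr.le

lemma radialClamp_of_norm_le (hr : 0 < r) {x : V} (hx : ‖x‖ ≤ r) : radialClamp r x = x := by
  rw [radialClamp, max_eq_left hx, div_self hr.ne', one_smul]

end RadialClamp

section Product

variable {E : ℕ → Type*} [∀ k, NormedAddCommGroup (E k)] [∀ k, NormedSpace ℝ (E k)]
  [∀ k, FiniteDimensional ℝ (E k)] {r : ℕ → ℝ}

lemma exists_forall_lt_apply_eq {F : (∀ k, E k) → ∀ k, E k} (hF : Continuous F)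
    (hr : ∀ x k, ‖F x k‖ ≤ r k) (n : ℕ) :
    ∃ x ∈ univ.pi fun k => closedBall 0 (r k), ∀ k < n, F x k = x k := by
  let extend : (∀ i : Fin n, E i) → ∀ k, E k := fun w k => if h : k < n then w ⟨k, h⟩ else 0
  have hextend : Continuous extend := by
    refine continuous_pi fun k => ?_
    by_cases h : k < n
    · simp only [extend, h, dite_true]; fun_prop
    · simp only [extend, h, dite_false]; fun_prop
  have hr0 : ∀ k, 0 ≤ r k := fun k => (norm_nonneg _).trans (hr 0 k)
  obtain ⟨w, hw⟩ := exists_eq_of_continuous_of_norm_le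
    (f := fun (w : ∀ i : Fin n, E i) (i : Fin n) => F (extend w) i)
    (continuous_pi fun i => (continuous_apply _).comp (hF.comp hextend))
    (R := ∑ i : Fin n, r i)
    fun w => (pi_norm_le_iff_of_nonneg (Finset.sum_nonneg fun i _ => hr0 _)).2 fun i : Fin n =>
      (hr (extend w) i).trans (Finset.single_le_sum (f := fun i : Fin n => r i)
        (fun j _ => hr0 j) (Finset.mem_univ i))
  have hfix : ∀ k < n, F (extend w) k = extend w k := fun k hk => by
    simpa only [extend, hk, dite_true] using congrFun hw ⟨k, hk⟩
  refine ⟨extend w, fun k _ => mem_closedBall_zero_iff.2 ?_, hfix⟩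
  by_cases hk : k < n
  · exact hfix k hk ▸ hr _ _
  · simpa only [extend, hk, dite_false, norm_zero] using hr0 k

theorem exists_eq_of_continuous_of_norm_apply_le {F : (∀ k, E k) → ∀ k, E k} (hF : Continuous F)
    (hr : ∀ x k, ‖F x k‖ ≤ r k) : ∃ x, F x = x := by
  choose x hx hfix using exists_forall_lt_apply_eq hF hr
  have (k : ℕ) : ProperSpace (E k) := FiniteDimensional.proper ℝ (E k)
  obtain ⟨a, -, φ, hφ, hlim⟩ :=
    (isCompact_univ_pi fun k => isCompact_closedBall (0 : E k) (r k)).tendsto_subseq hx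
  refine ⟨a, funext fun k => ?_⟩
  have hlim_F : Filter.Tendsto (fun n => F (x (φ n)) k) Filter.atTop (nhds (F a k)) :=
    ((continuous_apply k).comp hF).continuousAt.tendsto.comp hlim
  have hlim_apply : Filter.Tendsto (fun n => x (φ n) k) Filter.atTop (nhds (a k)) :=
    (continuous_apply k).continuousAt.tendsto.comp hlim
  refine tendsto_nhds_unique hlim_F (hlim_apply.congr' ?_)
  filter_upwards [Filter.eventually_gt_atTop k] with n hn
  exact (hfix (φ n) k (hn.trans_le (hφ.id_le n))).symm

theorem exists_mem_polydisc_eq_of_continuousOn (hr : ∀ k, 0 < r k) {F : (∀ k, E k) → ∀ k, E k}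
    (hF : ContinuousOn F (univ.pi fun k => closedBall 0 (r k)))
    (hmaps : MapsTo F (univ.pi fun k => closedBall 0 (r k))
      (univ.pi fun k => closedBall 0 (r k))) :
    ∃ x ∈ univ.pi fun k => closedBall 0 (r k), F x = x := by
  let clamp : (∀ k, E k) → ∀ k, E k := fun x k => radialClamp (r k) (x k)
  have hclamp : ∀ x, clamp x ∈ univ.pi fun k => closedBall 0 (r k) := fun x k _ =>
    mem_closedBall_zero_iff.2 (norm_radialClamp_le (hr k) (x k))
  have hclamp_cont : Continuous clamp := continuous_pi fun k =>
    (continuous_radialClamp (hr k)).comp (continuous_apply k)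
  obtain ⟨x, hx⟩ := exists_eq_of_continuous_of_norm_apply_le (hF.comp_continuous hclamp_cont hclamp)
    fun x k => mem_closedBall_zero_iff.1 (hmaps (hclamp x) k (mem_univ k))
  have hx_mem : x ∈ univ.pi fun k => closedBall 0 (r k) := hx ▸ hmaps (hclamp x)
  have hclamp_x : clamp x = x := funext fun k =>
    radialClamp_of_norm_le (hr k) (mem_closedBall_zero_iff.1 (hx_mem k (mem_univ k)))
  exact ⟨x, hx_mem, by rwa [Function.comp_apply, hclamp_x] at hx⟩

end Product

end Brouwer

section TrigonometricSeries

open Complex (I exp)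

/-- Coefficient sequences decaying faster than every power of the index: the coefficients of
smooth periodic functions. -/
def RapidDecay (a : ℕ → ℂ) : Prop :=
  ∀ n : ℕ, Summable fun k : ℕ => (k : ℝ) ^ n * ‖a k‖

/-- The real part of the one-sided trigonometric series `∑ a_k e^{ikθ}`. Every real Fourier series
has this form, with `a_k` equal to twice the `k`-th Fourier coefficient for `k ≠ 0`. -/
noncomputable def trigSeries (a : ℕ → ℂ) (θ : ℝ) : ℝ :=
  (∑' k : ℕ, a k * exp (k * θ * I)).re

variable {a b : ℕ → ℂ}

lemma summable_pow_mul_norm_of_le {m n : ℕ} (hmn : m ≤ n)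
    (ha : Summable fun k : ℕ => (k : ℝ) ^ n * ‖a k‖) :
    Summable fun k : ℕ => (k : ℝ) ^ m * ‖a k‖ := by
  refine Summable.of_norm_bounded_eventually_nat ha ?_
  filter_upwards [Filter.eventually_ge_atTop 1] with k hk
  have hk1 : (1 : ℝ) ≤ k := by exact_mod_cast hk
  rw [Real.norm_of_nonneg (by positivity)]
  gcongr

namespace RapidDecay

lemma summable_norm (ha : RapidDecay a) : Summable fun k => ‖a k‖ := by
  simpa only [pow_zero, one_mul] using ha 0

lemma of_norm_le (ha : RapidDecay a) {C : ℝ} (p : ℕ)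
    (hb : ∀ k : ℕ, ‖b k‖ ≤ C * (k : ℝ) ^ p * ‖a k‖) : RapidDecay b := by
  intro n
  refine Summable.of_nonneg_of_le (fun k => by positivity) (fun k => ?_)
    ((ha (n + p)).mul_left C)
  calc (k : ℝ) ^ n * ‖b k‖ ≤ (k : ℝ) ^ n * (C * (k : ℝ) ^ p * ‖a k‖) := by gcongr; exact hb k
    _ = C * ((k : ℝ) ^ (n + p) * ‖a k‖) := by ring

lemma add (ha : RapidDecay a) (hb : RapidDecay b) : RapidDecay (a + b) := fun n =>
  Summable.of_nonneg_of_le (fun k => by positivity)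
    (fun k => (mul_le_mul_of_nonneg_left (norm_add_le (a k) (b k)) (by positivity)).trans_eq
      (mul_add _ _ _)) ((ha n).add (hb n))

lemma smul (ha : RapidDecay a) (c : ℝ) : RapidDecay (c • a) :=
  ha.of_norm_le (C := ‖c‖) 0 fun k => by rw [pow_zero, mul_one, Pi.smul_apply, norm_smul]

end RapidDecay

lemma norm_exp_natCast_mul_ofReal_mul_I (k : ℕ) (θ : ℝ) : ‖exp (k * θ * I)‖ = 1 := by
  simpa only [Complex.ofReal_mul, Complex.ofReal_natCast] using
    Complex.norm_exp_ofReal_mul_I (k * θ)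

lemma summable_mul_exp (ha : Summable fun k => ‖a k‖) (θ : ℝ) :
    Summable fun k : ℕ => a k * exp (k * θ * I) :=
  Summable.of_norm <| by simpa only [norm_mul, norm_exp_natCast_mul_ofReal_mul_I, mul_one] using ha

lemma continuous_trigSeries_prod {X : Type*} [TopologicalSpace X] {a : X → ℕ → ℂ} {u : ℕ → ℝ}
    (ha : ∀ k, Continuous fun x => a x k) (hu : Summable u) (hau : ∀ x k, ‖a x k‖ ≤ u k) :
    Continuous fun p : X × ℝ => trigSeries (a p.1) p.2 := by
  refine Complex.continuous_re.comp (continuous_tsum (fun k => ?_) hu fun k p => ?_)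
  · exact ((ha k).comp continuous_fst).mul (by fun_prop)
  · rw [norm_mul, norm_exp_natCast_mul_ofReal_mul_I, mul_one]
    exact hau p.1 k

lemma continuous_trigSeries (ha : Summable fun k => ‖a k‖) : Continuous (trigSeries a) :=
  (continuous_trigSeries_prod (X := Unit) (a := fun _ => a) (fun _ => continuous_const) ha
    fun _ _ => le_rfl).comp (Continuous.prodMk_right ())

lemma hasDerivAt_trigSeries (ha : Summable fun k : ℕ => (k : ℝ) ^ 1 * ‖a k‖) (θ : ℝ) :
    HasDerivAt (trigSeries a) (trigSeries (fun k => k * I * a k) θ) θ := by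
  have ha0 : Summable fun k => ‖a k‖ := by
    simpa only [pow_zero, one_mul] using summable_pow_mul_norm_of_le zero_le_one ha
  have hterm (k : ℕ) (θ : ℝ) : HasDerivAt (fun θ : ℝ => a k * exp (k * θ * I))
      (k * I * a k * exp (k * θ * I)) θ := by
    have hphase : HasDerivAt (fun θ : ℝ => (k * θ * I : ℂ)) (k * I) θ := by
      simpa only [Complex.ofRealCLM_apply, Complex.ofReal_one, mul_one] using
        ((Complex.ofRealCLM.hasDerivAt (x := θ)).const_mul (k : ℂ)).mul_const I
    exact (hphase.cexp.const_mul (a k)).congr_deriv (by ring)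
  have hseries := hasDerivAt_tsum (𝕜 := ℝ) ha hterm (fun k θ => by
    simp [norm_exp_natCast_mul_ofReal_mul_I]) (summable_mul_exp ha0 0) θ
  exact Complex.reCLM.hasFDerivAt.comp_hasDerivAt θ hseries

lemma contDiff_trigSeries {n : ℕ} (ha : Summable fun k : ℕ => (k : ℝ) ^ n * ‖a k‖) :
    ContDiff ℝ n (trigSeries a) := by
  induction n generalizing a with
  | zero => exact contDiff_zero.2 (continuous_trigSeries (by simpa using ha))
  | succ n ih =>
    have hderiv := hasDerivAt_trigSeries (summable_pow_mul_norm_of_le (Nat.le_add_left 1 n) ha)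
    have hderiv_coeff : Summable fun k : ℕ => (k : ℝ) ^ n * ‖(k * I * a k : ℂ)‖ :=
      ha.congr fun k => by simp only [norm_mul, Complex.norm_natCast, Complex.norm_I]; ring
    push_cast
    rw [contDiff_succ_iff_deriv]
    refine ⟨fun θ => (hderiv θ).differentiableAt, by simp, ?_⟩
    rw [funext fun θ => (hderiv θ).deriv]
    exact ih hderiv_coeff

lemma trigSeries_add (ha : Summable fun k => ‖a k‖) (hb : Summable fun k => ‖b k‖) (θ : ℝ) :
    trigSeries (a + b) θ = trigSeries a θ + trigSeries b θ := by
  simp only [trigSeries, Pi.add_apply, add_mul]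
  rw [(summable_mul_exp ha θ).tsum_add (summable_mul_exp hb θ), Complex.add_re]

lemma trigSeries_smul (c : ℝ) (a : ℕ → ℂ) (θ : ℝ) :
    trigSeries (c • a) θ = c * trigSeries a θ := by
  simp only [trigSeries, Pi.smul_apply, Complex.real_smul, mul_assoc]
  rw [tsum_mul_left, Complex.re_ofReal_mul]

lemma trigSeries_of_forall_ne_zero (ha : ∀ k ≠ 0, a k = 0) (θ : ℝ) :
    trigSeries a θ = (a 0).re := by
  rw [trigSeries, tsum_eq_single 0 fun k hk => by rw [ha k hk, zero_mul]]
  simp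

lemma trigSeries_periodic_of_forall_not_dvd {M : ℕ} (hM : M ≠ 0) (ha : ∀ k, ¬ M ∣ k → a k = 0) :
    Function.Periodic (trigSeries a) (2 * π / M) := by
  intro θ
  simp only [trigSeries]
  congr 2
  funext k
  by_cases hk : M ∣ k
  · obtain ⟨m, rfl⟩ := hk
    congr 1
    rw [Complex.exp_eq_exp_iff_exists_int]
    refine ⟨m, ?_⟩
    push_cast
    field_simp
  · rw [ha k hk, zero_mul, zero_mul]

lemma trigSeries_periodic (a : ℕ → ℂ) : Function.Periodic (trigSeries a) (2 * π) := by
  simpa using trigSeries_periodic_of_forall_not_dvd (a := a) one_ne_zero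
    fun k hk => absurd (one_dvd k) hk

lemma sum_exp_neg_natCast_mul_eq_ite {M : ℕ} (hM : M ≠ 0) (k : ℕ) :
    ∑ j ∈ Finset.range M, exp (-(k * ((j * (2 * π / M) : ℝ) : ℂ) * I)) =
      if M ∣ k then (M : ℂ) else 0 := by
  have hζ : IsPrimitiveRoot (exp (2 * π * I / M))⁻¹ M :=
    (Complex.isPrimitiveRoot_exp M hM).inv
  set ζ := (exp (2 * π * I / M))⁻¹ with hζ_def
  have hterm (j : ℕ) : exp (-(k * ((j * (2 * π / M) : ℝ) : ℂ) * I)) = (ζ ^ k) ^ j := by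
    rw [hζ_def, ← Complex.exp_neg, ← Complex.exp_nat_mul, ← Complex.exp_nat_mul]
    congr 1
    push_cast
    ring
  simp only [hterm]
  split_ifs with hk
  · simp only [(hζ.pow_eq_one_iff_dvd k).2 hk, one_pow, Finset.sum_const, Finset.card_range,
      nsmul_eq_mul, mul_one]
  · rw [geom_sum_eq (mt (hζ.pow_eq_one_iff_dvd k).1 hk), ← pow_mul, mul_comm, pow_mul,
      hζ.pow_eq_one, one_pow, sub_self, zero_div]

lemma sum_trigSeries_sub_eq {M : ℕ} (hM : M ≠ 0) (ha : Summable fun k => ‖a k‖) (θ : ℝ) :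
    ∑ j ∈ Finset.range M, trigSeries a (θ - j * (2 * π / M)) =
      M * trigSeries (fun k => if M ∣ k then a k else 0) θ := by
  simp only [trigSeries, ← Complex.re_ofReal_mul, ← Complex.re_sum]
  rw [← Summable.tsum_finsetSum fun j _ => summable_mul_exp ha _, ← tsum_mul_left]
  congr 2
  funext k
  have hshift (j : ℕ) : a k * exp (k * (θ - j * (2 * π / M) : ℝ) * I) =
      exp (-(k * ((j * (2 * π / M) : ℝ) : ℂ) * I)) * (a k * exp (k * θ * I)) := by
    rw [mul_left_comm, ← Complex.exp_add]
    congr 2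
    push_cast
    ring
  simp only [hshift, ← Finset.sum_mul, sum_exp_neg_natCast_mul_eq_ite hM]
  split_ifs <;> simp

end TrigonometricSeries

section FourierCoefficients

open MeasureTheory Set
open Complex (I exp)

section ComplexValued

variable {f : ℝ → ℂ}

lemma fourier_two_pi_coe_apply (k : ℤ) (θ : ℝ) :
    fourier k (θ : AddCircle (2 * π)) = exp (k * θ * I) := by
  have hpi : (π : ℂ) ≠ 0 := by exact_mod_cast Real.pi_ne_zero
  rw [fourier_coe_apply]
  congr 1
  push_cast
  field_simp

lemma fourierCoeffOn_two_pi_eq_integral (f : ℝ → ℂ) (k : ℤ) :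
    fourierCoeffOn two_pi_pos f k =
      (1 / (2 * π) : ℝ) * ∫ θ in (0 : ℝ)..2 * π, exp (-(k * θ * I)) * f θ := by
  rw [fourierCoeffOn_eq_integral, sub_zero, Complex.real_smul]
  simp only [smul_eq_mul, fourier_two_pi_coe_apply, Int.cast_neg, neg_mul]

lemma norm_fourierCoeffOn_two_pi_le {b : ℝ} (hf : ∀ θ, ‖f θ‖ ≤ b) (k : ℤ) :
    ‖fourierCoeffOn two_pi_pos f k‖ ≤ b := by
  have hexp (θ : ℝ) : ‖exp (-(k * θ * I))‖ = 1 := by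
    simpa only [Complex.ofReal_neg, Complex.ofReal_mul, Complex.ofReal_intCast, neg_mul] using
      Complex.norm_exp_ofReal_mul_I (-(k * θ))
  have hintegral : ‖∫ θ in (0 : ℝ)..2 * π, exp (-(k * θ * I)) * f θ‖ ≤ b * |2 * π - 0| :=
    intervalIntegral.norm_integral_le_of_norm_le_const fun θ _ => by
      rw [norm_mul, hexp, one_mul]
      exact hf θ
  rw [sub_zero, abs_of_pos two_pi_pos] at hintegral
  rw [fourierCoeffOn_two_pi_eq_integral, norm_mul, Complex.norm_real,
    Real.norm_of_nonneg (by positivity), one_div_mul_eq_div, div_le_iff₀ two_pi_pos]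
  exact hintegral

lemma continuous_fourierCoeffOn_two_pi {X : Type*} [TopologicalSpace X] {f : X → ℝ → ℂ}
    (hf : Continuous fun p : X × ℝ => f p.1 p.2) (k : ℤ) :
    Continuous fun x => fourierCoeffOn two_pi_pos (f x) k := by
  simp only [fourierCoeffOn_two_pi_eq_integral]
  refine continuous_const.mul
    (intervalIntegral.continuous_parametric_intervalIntegral_of_continuous' ?_ _ _)
  exact Continuous.mul (by fun_prop) hf

lemma summable_sq_norm_fourierCoeffOn {a b : ℝ} (hab : a < b) (hf : Continuous f) :
    Summable fun k : ℤ => ‖fourierCoeffOn hab f k‖ ^ 2 := by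
  obtain ⟨C, hC⟩ := (isCompact_Icc (a := a) (b := b)).exists_bound_of_continuousOn
    hf.continuousOn
  have hmem : MemLp f 2 (volume.restrict (Ioc a b)) := by
    refine MemLp.of_bound hf.aestronglyMeasurable C ?_
    rw [ae_restrict_iff' measurableSet_Ioc]
    exact .of_forall fun θ hθ => hC θ (Ioc_subset_Icc_self hθ)
  exact (hasSum_sq_fourierCoeffOn hab hmem).summable

lemma fourierCoeffOn_two_pi_deriv (hf : ContDiff ℝ 1 f) (hper : f (2 * π) = f 0) (k : ℤ) :
    fourierCoeffOn two_pi_pos (deriv f) k = k * I * fourierCoeffOn two_pi_pos f k := by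
  have hderiv : ∀ θ, HasDerivAt f (deriv f θ) θ := fun θ =>
    (hf.differentiable one_ne_zero θ).hasDerivAt
  have hint : IntervalIntegrable (deriv f) volume 0 (2 * π) :=
    (hf.continuous_deriv le_rfl).intervalIntegrable _ _
  rcases eq_or_ne k 0 with rfl | hk
  · rw [fourierCoeffOn_two_pi_eq_integral]
    simp only [Int.cast_zero, zero_mul, neg_zero, Complex.exp_zero, one_mul]
    rw [intervalIntegral.integral_eq_sub_of_hasDerivAt (fun θ _ => hderiv θ) hint, hper, sub_self,
      mul_zero]
  · have hk' : (k : ℂ) ≠ 0 := by exact_mod_cast hk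
    have hpi : (π : ℂ) ≠ 0 := by exact_mod_cast Real.pi_ne_zero
    rw [fourierCoeffOn_of_hasDerivAt two_pi_pos hk (fun θ _ => hderiv θ) hint, hper]
    push_cast
    field_simp
    simp [mul_assoc]

lemma iteratedDeriv_periodic {E : Type*} [NormedAddCommGroup E] [NormedSpace ℝ E] {f : ℝ → E}
    {c : ℝ} (hper : Function.Periodic f c) (n : ℕ) :
    Function.Periodic (iteratedDeriv n f) c := fun θ => by
  have hshift := iteratedDeriv_comp_add_const n f c
  rw [funext hper] at hshift
  exact (congrFun hshift θ).symm

lemma fourierCoeffOn_two_pi_iteratedDeriv {n : ℕ} (hf : ContDiff ℝ n f)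
    (hper : Function.Periodic f (2 * π)) (k : ℤ) :
    fourierCoeffOn two_pi_pos (iteratedDeriv n f) k =
      (k * I) ^ n * fourierCoeffOn two_pi_pos f k := by
  induction n with
  | zero => rw [iteratedDeriv_zero, pow_zero, one_mul]
  | succ n ih =>
    have hcontDiff : ContDiff ℝ 1 (iteratedDeriv n f) := by
      refine contDiff_one_iff_deriv.2 ⟨hf.differentiable_iteratedDeriv n
        (by exact_mod_cast Nat.lt_succ_self n), ?_⟩
      rw [← iteratedDeriv_succ]
      exact hf.continuous_iteratedDeriv (n + 1) le_rfl
    have hends : iteratedDeriv n f (2 * π) = iteratedDeriv n f 0 := by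
      simpa only [zero_add] using iteratedDeriv_periodic hper n 0
    rw [iteratedDeriv_succ, fourierCoeffOn_two_pi_deriv hcontDiff hends,
      ih (hf.of_le (by exact_mod_cast Nat.le_succ n)), pow_succ']
    ring

lemma summable_div_natCast_of_summable_sq {u : ℕ → ℝ} (hu : ∀ k, 0 ≤ u k)
    (hsq : Summable fun k => u k ^ 2) : Summable fun k : ℕ => u k / k := by
  have hinv : Summable fun k : ℕ => 1 / (k : ℝ) ^ 2 := Real.summable_one_div_nat_pow.2 one_lt_two
  refine Summable.of_nonneg_of_le (fun k => div_nonneg (hu k) k.cast_nonneg) (fun k => ?_)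
    (hsq.add hinv)
  rw [div_eq_mul_one_div, ← one_div_pow]
  nlinarith [two_mul_le_add_sq (u k) (1 / (k : ℝ)), sq_nonneg (u k), sq_nonneg (1 / (k : ℝ))]

lemma summable_pow_mul_norm_fourierCoeffOn_div {n : ℕ} (hf : ContDiff ℝ n f)
    (hper : Function.Periodic f (2 * π)) :
    Summable fun k : ℕ => (k : ℝ) ^ n * ‖fourierCoeffOn two_pi_pos f k‖ / k := by
  refine summable_div_natCast_of_summable_sq (fun k => by positivity) ?_
  refine ((summable_sq_norm_fourierCoeffOn two_pi_pos
    (hf.continuous_iteratedDeriv n le_rfl)).comp_injective Nat.cast_injective).congr fun k => ?_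
  simp [fourierCoeffOn_two_pi_iteratedDeriv hf hper]

lemma hasSum_fourierCoeffOn_two_pi (hf : Continuous f) (hper : Function.Periodic f (2 * π))
    (hsum : Summable (fourierCoeffOn two_pi_pos f)) (θ : ℝ) :
    HasSum (fun k : ℤ => fourierCoeffOn two_pi_pos f k * exp (k * θ * I)) (f θ) := by
  have : Fact (0 < 2 * π) := ⟨two_pi_pos⟩
  let F : C(AddCircle (2 * π), ℂ) := ⟨hper.lift, continuous_coinduced_dom.2 hf⟩
  have hF : fourierCoeff F = fourierCoeffOn two_pi_pos f := by
    funext k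
    rw [fourierCoeff_eq_intervalIntegral _ _ 0, fourierCoeffOn_eq_integral, zero_add, sub_zero]
    rfl
  have hpointwise := has_pointwise_sum_fourier_series_of_summable (hF ▸ hsum)
    (θ : AddCircle (2 * π))
  simp only [hF, smul_eq_mul, fourier_two_pi_coe_apply] at hpointwise
  exact hpointwise

end ComplexValued

/-- The coefficients which make `trigSeries` reproduce a real `2π`-periodic function: its Fourier
coefficients of nonnegative index, doubled away from the mean to account for the modes of negative
index. -/
noncomputable def oneSidedCoeff (f : ℝ → ℝ) (k : ℕ) : ℂ :=
  (if k = 0 then 1 else 2) * fourierCoeffOn two_pi_pos (fun θ => (f θ : ℂ)) k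

variable {f : ℝ → ℝ}

lemma norm_fourierCoeffOn_le_norm_oneSidedCoeff (f : ℝ → ℝ) (k : ℕ) :
    ‖fourierCoeffOn two_pi_pos (fun θ => (f θ : ℂ)) k‖ ≤ ‖oneSidedCoeff f k‖ := by
  rw [oneSidedCoeff, norm_mul]
  refine le_mul_of_one_le_left (norm_nonneg _) ?_
  split_ifs <;> simp

lemma norm_oneSidedCoeff_le {b : ℝ} (hf : ∀ θ, |f θ| ≤ b) (k : ℕ) :
    ‖oneSidedCoeff f k‖ ≤ (if k = 0 then 1 else 2) * b := by
  have hcoeff := norm_fourierCoeffOn_two_pi_le (f := fun θ => (f θ : ℂ))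
    (fun θ => (Complex.norm_real (f θ)).trans_le (hf θ)) k
  rw [oneSidedCoeff, norm_mul]
  split_ifs <;> simpa using hcoeff

lemma continuous_oneSidedCoeff {X : Type*} [TopologicalSpace X] {f : X → ℝ → ℝ}
    (hf : Continuous fun p : X × ℝ => f p.1 p.2) (k : ℕ) :
    Continuous fun x => oneSidedCoeff (f x) k :=
  continuous_const.mul (continuous_fourierCoeffOn_two_pi (Complex.continuous_ofReal.comp hf) k)

lemma summable_pow_mul_norm_oneSidedCoeff_div {n : ℕ} (hf : ContDiff ℝ n f)
    (hper : Function.Periodic f (2 * π)) :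
    Summable fun k : ℕ => (k : ℝ) ^ n * ‖oneSidedCoeff f k‖ / k := by
  have hcoeff := summable_pow_mul_norm_fourierCoeffOn_div (f := fun θ => (f θ : ℂ))
    (Complex.ofRealCLM.contDiff.comp hf) (fun θ => congrArg Complex.ofReal (hper θ))
  refine (hcoeff.mul_left 2).congr fun k => ?_
  rcases eq_or_ne k 0 with rfl | hk
  · simp
  · simp only [oneSidedCoeff, if_neg hk, norm_mul, Complex.norm_two]
    ring

lemma fourierCoeffOn_two_pi_ofReal_neg (f : ℝ → ℝ) (k : ℤ) :
    fourierCoeffOn two_pi_pos (fun θ => (f θ : ℂ)) (-k) =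
      (starRingEnd ℂ) (fourierCoeffOn two_pi_pos (fun θ => (f θ : ℂ)) k) := by
  rw [fourierCoeffOn_two_pi_eq_integral, fourierCoeffOn_two_pi_eq_integral, map_mul,
    Complex.conj_ofReal, intervalIntegral.integral_of_le two_pi_pos.le,
    intervalIntegral.integral_of_le two_pi_pos.le, ← integral_conj]
  congr 2
  funext θ
  simp [← Complex.exp_conj]

lemma trigSeries_oneSidedCoeff (hf : Continuous f) (hper : Function.Periodic f (2 * π))
    (hsum : Summable fun k => ‖oneSidedCoeff f k‖) (θ : ℝ) :
    trigSeries (oneSidedCoeff f) θ = f θ := by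
  set c := fourierCoeffOn two_pi_pos fun θ => (f θ : ℂ) with hc
  have hconj (k : ℤ) : c (-k) = (starRingEnd ℂ) (c k) := fourierCoeffOn_two_pi_ofReal_neg f k
  have hsum_nat : Summable fun k : ℕ => ‖c k‖ :=
    hsum.of_nonneg_of_le (fun _ => norm_nonneg _) (norm_fourierCoeffOn_le_norm_oneSidedCoeff f)
  have hsum_int : Summable c :=
    .of_norm (.of_nat_of_neg hsum_nat (by simpa only [hconj, RCLike.norm_conj] using hsum_nat))
  have htwo_sided := Complex.hasSum_re (hasSum_fourierCoeffOn_two_pi (f := fun θ => (f θ : ℂ))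
    (Complex.continuous_ofReal.comp hf) (fun θ => congrArg Complex.ofReal (hper θ)) hsum_int
    θ).nat_add_neg
  have hfold (k : ℕ) : (c k * exp ((k : ℤ) * θ * I) +
      c (-(k : ℤ)) * exp ((-(k : ℤ) : ℤ) * θ * I)).re =
      (oneSidedCoeff f k * exp (k * θ * I)).re + if k = 0 then (c 0).re else 0 := by
    have hneg : c (-(k : ℤ)) * exp ((-(k : ℤ) : ℤ) * θ * I) =
        (starRingEnd ℂ) (c k * exp (k * θ * I)) := by
      rw [hconj, map_mul, ← Complex.exp_conj]
      simp
    rw [hneg, Complex.add_re, Complex.conj_re]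
    rcases eq_or_ne k 0 with rfl | hk
    · simp [oneSidedCoeff, ← hc]
    · have hdouble : oneSidedCoeff f k = c k + c k := by
        rw [oneSidedCoeff, if_neg hk, two_mul, hc]
      rw [hdouble, if_neg hk, add_zero, add_mul, Complex.add_re, Int.cast_natCast]
  have hone_sided := Complex.hasSum_re (summable_mul_exp hsum θ).hasSum
  have hunique := ((hone_sided.add (hasSum_ite_eq 0 (c 0).re)).congr_fun hfold).unique htwo_sided
  simpa [trigSeries, ← hc] using hunique

end FourierCoefficients

section PhaseProblem

open Set Metric
open scoped ContDiff

/-- The compact set of sequences that contains `oneSidedCoeff f` for every `f` with `|f| ≤ b`. -/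
def coeffPolydisc (b : ℝ) : Set (ℕ → ℂ) :=
  univ.pi fun k => closedBall 0 ((if k = 0 then 1 else 2) * b)

lemma norm_apply_le_of_mem_coeffPolydisc {b : ℝ} {x : ℕ → ℂ} (hx : x ∈ coeffPolydisc b) (k : ℕ) :
    ‖x k‖ ≤ (if k = 0 then 1 else 2) * b :=
  mem_closedBall_zero_iff.1 (hx k (mem_univ k))

lemma norm_apply_le_two_mul_of_mem_coeffPolydisc {b : ℝ} {x : ℕ → ℂ} (hx : x ∈ coeffPolydisc b)
    (k : ℕ) : ‖x k‖ ≤ 2 * b := by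
  have hk := norm_apply_le_of_mem_coeffPolydisc hx k
  have hb : 0 ≤ b := by
    simpa using (norm_nonneg _).trans (norm_apply_le_of_mem_coeffPolydisc hx 0)
  split_ifs at hk <;> linarith

variable {g : ℝ → ℝ} {b : ℝ}

lemma exists_oneSidedCoeff_eq_of_continuousOn (hg : Continuous g) (hb : 0 < b)
    (hgb : ∀ θ, |g θ| ≤ b) {U : (ℕ → ℂ) → ℕ → ℂ} {v : ℕ → ℝ}
    (hU : ∀ k, ContinuousOn (fun x => U x k) (coeffPolydisc b)) (hv : Summable v)
    (hUv : ∀ x ∈ coeffPolydisc b, ∀ k, ‖U x k‖ ≤ v k) :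
    ∃ x ∈ coeffPolydisc b, oneSidedCoeff (fun θ => g (θ + trigSeries (U x) θ)) = x := by
  refine exists_mem_polydisc_eq_of_continuousOn
    (fun k => mul_pos (by split_ifs <;> norm_num) hb) ?_ ?_
  · rw [continuousOn_iff_continuous_domRestrict]
    have hseries : Continuous fun p : coeffPolydisc b × ℝ => trigSeries (U p.1) p.2 :=
      continuous_trigSeries_prod (a := fun x : coeffPolydisc b => U x)
        (fun k => (hU k).domRestrict) hv fun x => hUv x x.2
    exact continuous_pi fun k => continuous_oneSidedCoeff
      (f := fun (x : coeffPolydisc b) θ => g (θ + trigSeries (U x) θ))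
      (hg.comp (continuous_snd.add hseries)) k
  · exact fun x _ k _ => mem_closedBall_zero_iff.2 (norm_oneSidedCoeff_le (fun θ => hgb _) k)

section Regularity

variable {u σ : ℕ → ℂ} {B C : ℝ}

lemma periodic_comp_add_trigSeries (hper : Function.Periodic g (2 * π)) (u : ℕ → ℂ) :
    Function.Periodic (fun θ => g (θ + trigSeries u θ)) (2 * π) := fun θ => by
  simp only [trigSeries_periodic u θ, add_right_comm θ, hper (θ + trigSeries u θ)]

lemma summable_norm_of_sq_mul_norm_le (hu : ∀ k : ℕ, (k : ℝ) ^ 2 * ‖u k‖ ≤ B) :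
    Summable fun k => ‖u k‖ := by
  have hinv : Summable fun k : ℕ => 1 / (k : ℝ) ^ 2 := Real.summable_one_div_nat_pow.2 one_lt_two
  refine Summable.of_norm_bounded_eventually_nat (hinv.mul_left B) ?_
  filter_upwards [Filter.eventually_ge_atTop 1] with k hk
  have : (0 : ℝ) < k := by exact_mod_cast hk
  rw [norm_norm, mul_one_div, le_div_iff₀' (by positivity)]
  exact hu k

lemma summable_pow_succ_mul_norm_of_sq_mul_norm_le {n : ℕ}
    (huσ : ∀ k : ℕ, (k : ℝ) ^ 2 * ‖u k‖ ≤ C * ‖σ k‖)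
    (hσ : Summable fun k : ℕ => (k : ℝ) ^ n * ‖σ k‖ / k) :
    Summable fun k : ℕ => (k : ℝ) ^ (n + 1) * ‖u k‖ := by
  refine Summable.of_nonneg_of_le (fun k => by positivity) (fun k => ?_) (hσ.mul_left C)
  rcases eq_or_ne k 0 with rfl | hk
  · simp
  · have : (0 : ℝ) < k := by exact_mod_cast Nat.pos_of_ne_zero hk
    calc (k : ℝ) ^ (n + 1) * ‖u k‖ = (k : ℝ) ^ n / k * ((k : ℝ) ^ 2 * ‖u k‖) := by
          field_simp
          ring
      _ ≤ (k : ℝ) ^ n / k * (C * ‖σ k‖) := mul_le_mul_of_nonneg_left (huσ k) (by positivity)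
      _ = C * ((k : ℝ) ^ n * ‖σ k‖ / k) := by ring

lemma rapidDecay_of_forall_summable_div (hσ : ∀ n : ℕ,
    Summable fun k : ℕ => (k : ℝ) ^ n * ‖σ k‖ / k) : RapidDecay σ := fun n => by
  refine Summable.of_norm_bounded_eventually_nat (hσ (n + 1)) ?_
  filter_upwards [Filter.eventually_ge_atTop 1] with k hk
  have : (0 : ℝ) < k := by exact_mod_cast hk
  rw [Real.norm_of_nonneg (by positivity)]
  apply le_of_eq
  field_simp
  ring

-- Bootstrap: `n` moments of `u` make the superposition `C^n`, which bounds its coefficients `σ`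
-- well enough to give `u` one more moment.
lemma rapidDecay_of_sq_mul_norm_le (hg : ContDiff ℝ ∞ g) (hper : Function.Periodic g (2 * π))
    (hgb : ∀ θ, |g θ| ≤ b)
    (hσ : oneSidedCoeff (fun θ => g (θ + trigSeries u θ)) = σ)
    (huσ : ∀ k : ℕ, (k : ℝ) ^ 2 * ‖u k‖ ≤ C * ‖σ k‖) : RapidDecay u ∧ RapidDecay σ := by
  have hmoment_σ (n : ℕ) (hu : Summable fun k : ℕ => (k : ℝ) ^ n * ‖u k‖) :
      Summable fun k : ℕ => (k : ℝ) ^ n * ‖σ k‖ / k := by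
    rw [← hσ]
    exact summable_pow_mul_norm_oneSidedCoeff_div
      ((contDiff_infty.1 hg n).comp (contDiff_id.add (contDiff_trigSeries hu)))
      (periodic_comp_add_trigSeries hper u)
  have hσb (k : ℕ) : ‖σ k‖ ≤ 2 * b := by
    have hb : 0 ≤ b := (abs_nonneg _).trans (hgb 0)
    rw [← hσ]
    refine (norm_oneSidedCoeff_le (fun θ => hgb _) k).trans ?_
    split_ifs <;> linarith
  have hu : RapidDecay u := fun n => by
    induction n with
    | zero =>
      simp only [pow_zero, one_mul]
      refine summable_norm_of_sq_mul_norm_le (B := |C| * (2 * b)) fun k => (huσ k).trans ?_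
      exact mul_le_mul (le_abs_self C) (hσb k) (norm_nonneg _) (abs_nonneg C)
    | succ n ih => exact summable_pow_succ_mul_norm_of_sq_mul_norm_le huσ (hmoment_σ n ih)
  exact ⟨hu, rapidDecay_of_forall_summable_div fun n => hmoment_σ n (hu n)⟩

lemma sq_mul_norm_neg_mul_le {h : ℕ → ℂ} (hh : ∀ k : ℕ, ‖h k‖ ≤ C / (k : ℝ) ^ 2) (k : ℕ) :
    (k : ℝ) ^ 2 * ‖-(σ k * h k)‖ ≤ C * ‖σ k‖ := by
  rcases eq_or_ne k 0 with rfl | hk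
  · have hC : 0 ≤ C := by simpa using (norm_nonneg _).trans (hh 1)
    simpa using mul_nonneg hC (norm_nonneg (σ 0))
  · have : (0 : ℝ) < k := by exact_mod_cast Nat.pos_of_ne_zero hk
    rw [norm_neg, norm_mul, mul_left_comm, mul_comm C]
    exact mul_le_mul_of_nonneg_left ((le_div_iff₀' (by positivity)).1 (hh k)) (norm_nonneg _)

end Regularity

theorem exists_trigSeries_eq_comp_add_trigSeries (hg : ContDiff ℝ ∞ g)
    (hper : Function.Periodic g (2 * π)) (hb : 0 < b) (hgb : ∀ θ, |g θ| ≤ b) {I κ C : ℝ}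
    (hbI : b < I) (hκ : 0 < κ) {H : ℕ → ℝ → ℂ} (hH : ∀ k, ContinuousOn (H k) (Ioi 0))
    (hHC : ∀ Ω, (I - b) / κ ≤ Ω → ∀ k : ℕ, ‖H k Ω‖ ≤ C / (k : ℝ) ^ 2) :
    ∃ (Ω : ℝ) (σ : ℕ → ℂ), 0 < Ω ∧ κ * Ω + (σ 0).re = I ∧ RapidDecay σ ∧
      RapidDecay (fun k => -(σ k * H k Ω)) ∧
      ∀ θ, trigSeries σ θ = g (θ + trigSeries (fun k => -(σ k * H k Ω)) θ) := by
  let W : (ℕ → ℂ) → ℝ := fun x => (I - (x 0).re) / κ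
  have hW_le {x : ℕ → ℂ} (hx : x ∈ coeffPolydisc b) : (I - b) / κ ≤ W x := by
    have hx0 : (x 0).re ≤ b := by
      simpa using (Complex.re_le_norm _).trans (norm_apply_le_of_mem_coeffPolydisc hx 0)
    simp only [W]
    gcongr
  have hW_pos {x : ℕ → ℂ} (hx : x ∈ coeffPolydisc b) : 0 < W x :=
    (div_pos (sub_pos.2 hbI) hκ).trans_le (hW_le hx)
  have hW : Continuous W := by fun_prop
  have hsum : Summable fun k : ℕ => 2 * b * (C / (k : ℝ) ^ 2) := by
    simpa only [mul_one_div] using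
      ((Real.summable_one_div_nat_pow.2 one_lt_two).mul_left C).mul_left (2 * b)
  obtain ⟨σ, hσ_mem, hσ⟩ := exists_oneSidedCoeff_eq_of_continuousOn hg.continuous hb hgb
    (U := fun x k => -(x k * H k (W x)))
    (fun k => ((continuous_apply k).continuousOn.mul
      ((hH k).comp hW.continuousOn fun x hx => hW_pos hx)).neg) hsum
    (fun x hx k => by
      rw [norm_neg, norm_mul]
      exact mul_le_mul (norm_apply_le_two_mul_of_mem_coeffPolydisc hx k) (hHC _ (hW_le hx) k)
        (norm_nonneg _) (by positivity))
  obtain ⟨hu_decay, hσ_decay⟩ := rapidDecay_of_sq_mul_norm_le hg hper hgb hσ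
    (sq_mul_norm_neg_mul_le (hHC _ (hW_le hσ_mem)))
  refine ⟨W σ, σ, hW_pos hσ_mem, ?_, hσ_decay, hu_decay, fun θ => ?_⟩
  · simp only [W]
    field_simp
    ring
  · have hf : Continuous fun θ => g (θ + trigSeries (fun k => -(σ k * H k (W σ))) θ) :=
      hg.continuous.comp (continuous_id.add (continuous_trigSeries hu_decay.summable_norm))
    have hseries := trigSeries_oneSidedCoeff hf (periodic_comp_add_trigSeries hper _)
      (by simpa only [hσ] using hσ_decay.summable_norm) θ
    rwa [hσ] at hseries

end PhaseProblem

section Multipliers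

open Complex (I)

/-- The symbol of `d/dt` on the mode `e^{ikΩt}`. -/
noncomputable def modeFreq (Ω : ℝ) (k : ℕ) : ℂ := ((k * Ω : ℝ) : ℂ) * I

/-- The symbol `L z² + R z + γ` of the left-hand side of the load equation. -/
noncomputable def loadSymbol (L R γ : ℝ) (z : ℂ) : ℂ := L * z ^ 2 + R * z + γ

/-- The determinant, up to the factor `z`, of the linear part of the junction and load equations on
the modes for which the averaged current on the right-hand side of the load equation survives. -/
noncomputable def coupledSymbol (β L R γ : ℝ) (z : ℂ) : ℂ :=
  (β * z + 1) * loadSymbol L R γ z + z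

/-- The response of mode `k` of the phase `φ` to a unit forcing of the junction equation. Only the
multiples of `M` are felt by the load. For `k = 0` the denominator vanishes, so the value is `0`. -/
noncomputable def phaseMultiplier (M : ℕ) (β L R γ : ℝ) (k : ℕ) (Ω : ℝ) : ℂ :=
  if M ∣ k then
    loadSymbol L R γ (modeFreq Ω k) / (modeFreq Ω k * coupledSymbol β L R γ (modeFreq Ω k))
  else 1 / (modeFreq Ω k * (β * modeFreq Ω k + 1))

/-- The response of mode `k` of the charge `Q` to a unit forcing of the junction equation. -/
noncomputable def loadMultiplier (M : ℕ) (β L R γ : ℝ) (k : ℕ) (Ω : ℝ) : ℂ :=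
  if k ≠ 0 ∧ M ∣ k then 1 / coupledSymbol β L R γ (modeFreq Ω k) else 0

lemma norm_modeFreq (Ω : ℝ) (k : ℕ) : ‖modeFreq Ω k‖ = k * |Ω| := by
  rw [modeFreq, norm_mul, Complex.norm_I, mul_one, Complex.norm_real, Real.norm_eq_abs, abs_mul,
    Nat.abs_cast]

lemma modeFreq_ne_zero {Ω : ℝ} (hΩ : Ω ≠ 0) {k : ℕ} (hk : k ≠ 0) : modeFreq Ω k ≠ 0 := by
  rw [← norm_ne_zero_iff, norm_modeFreq]
  positivity

variable {β L R γ : ℝ}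

lemma coupledSymbol_ofReal_mul_I (β L R γ ω : ℝ) : coupledSymbol β L R γ (ω * I) =
    (γ - L * ω ^ 2 - β * R * ω ^ 2 : ℝ) + (ω * (1 + R + β * (γ - L * ω ^ 2)) : ℝ) * I := by
  rw [coupledSymbol, loadSymbol]
  push_cast
  linear_combination ((L + β * R) * ω ^ 2 + β * L * ω ^ 3 * I) * Complex.I_sq

lemma coupledSymbol_re (β L R γ ω : ℝ) :
    (coupledSymbol β L R γ (ω * I)).re = γ - L * ω ^ 2 - β * R * ω ^ 2 := by
  rw [coupledSymbol_ofReal_mul_I, Complex.add_re, Complex.re_ofReal_mul, Complex.I_re, mul_zero,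
    add_zero, Complex.ofReal_re]

lemma coupledSymbol_im (β L R γ ω : ℝ) :
    (coupledSymbol β L R γ (ω * I)).im = ω * (1 + R + β * (γ - L * ω ^ 2)) := by
  rw [coupledSymbol_ofReal_mul_I, Complex.add_im, Complex.im_ofReal_mul, Complex.I_im, mul_one,
    Complex.ofReal_im, zero_add]

lemma mul_le_norm_mul_I_add_one (β ω : ℝ) : β * ω ≤ ‖(β * (ω * I) + 1 : ℂ)‖ := by
  simpa using (Complex.im_le_norm (β * (ω * I) + 1 : ℂ))

-- Below the resonance `β (L ω² - γ) = 1/2` the imaginary part is at least `ω / 2`; above it the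
-- real part is at least `L ω² - γ`, which dominates `ω` there.
lemma exists_le_mul_norm_coupledSymbol (hβ : 0 < β) (hR : 0 ≤ R) (hL : 0 ≤ L) (hγ : 0 ≤ γ) :
    ∃ C, ∀ ω : ℝ, 0 < ω → ω ≤ C * ‖coupledSymbol β L R γ (ω * I)‖ := by
  set K := 2 * β * (1 + 2 * β * γ) / L with hK
  refine ⟨max 2 √K, fun ω hω => ?_⟩
  rcases le_or_gt (β * (L * ω ^ 2 - γ)) (1 / 2) with hlow | hhigh
  · have him : ω / 2 ≤ ‖coupledSymbol β L R γ (ω * I)‖ := by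
      refine le_trans ?_ (Complex.im_le_norm _)
      rw [coupledSymbol_im]
      nlinarith
    calc ω ≤ 2 * ‖coupledSymbol β L R γ (ω * I)‖ := by linarith
      _ ≤ max 2 √K * ‖coupledSymbol β L R γ (ω * I)‖ := by gcongr; exact le_max_left _ _
  · have hd : 0 < L * ω ^ 2 - γ := by
      by_contra! hd
      linarith [mul_nonpos_of_nonneg_of_nonpos hβ.le hd]
    have hL_pos : 0 < L := hL.lt_of_ne (by rintro rfl; linarith)
    have hre : L * ω ^ 2 - γ ≤ ‖coupledSymbol β L R γ (ω * I)‖ := by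
      have hneg_re := (neg_le_abs _).trans (Complex.abs_re_le_norm (coupledSymbol β L R γ (ω * I)))
      have hdamping : 0 ≤ β * R * ω ^ 2 := by positivity
      rw [coupledSymbol_re] at hneg_re
      linarith
    have hsq : ω ^ 2 ≤ K * (L * ω ^ 2 - γ) ^ 2 := by
      rw [hK, div_mul_eq_mul_div, le_div_iff₀ hL_pos]
      nlinarith [mul_nonneg hβ.le hγ, mul_nonneg (mul_nonneg hβ.le hγ) hd.le]
    calc ω ≤ √(K * (L * ω ^ 2 - γ) ^ 2) := Real.le_sqrt_of_sq_le hsq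
      _ = √K * (L * ω ^ 2 - γ) := by rw [Real.sqrt_mul' _ (sq_nonneg _), Real.sqrt_sq hd.le]
      _ ≤ max 2 √K * ‖coupledSymbol β L R γ (ω * I)‖ := by gcongr; exact le_max_right _ _

lemma coupledSymbol_ne_zero (hβ : 0 < β) (hR : 0 ≤ R) (hL : 0 ≤ L) (hγ : 0 ≤ γ) {ω : ℝ}
    (hω : 0 < ω) : coupledSymbol β L R γ (ω * I) ≠ 0 := by
  obtain ⟨C, hC⟩ := exists_le_mul_norm_coupledSymbol hβ hR hL hγ
  intro hzero
  exact hω.not_ge (by simpa [hzero] using hC ω hω)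

lemma exists_mul_norm_loadSymbol_le (hβ : 0 < β) (hR : 0 ≤ R) (hL : 0 ≤ L) (hγ : 0 ≤ γ) :
    ∃ C, ∀ ω : ℝ, 0 < ω →
      ω * ‖loadSymbol L R γ (ω * I)‖ ≤ C * ‖coupledSymbol β L R γ (ω * I)‖ := by
  obtain ⟨C, hC⟩ := exists_le_mul_norm_coupledSymbol hβ hR hL hγ
  refine ⟨(1 + C) / β, fun ω hω => ?_⟩
  have hfactor : (β * (ω * I) + 1) * loadSymbol L R γ (ω * I) =
      coupledSymbol β L R γ (ω * I) - ω * I := by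
    rw [coupledSymbol]
    ring
  have hω_norm : ‖(ω * I : ℂ)‖ = ω := by simp [abs_of_pos hω]
  rw [div_mul_eq_mul_div, le_div_iff₀ hβ]
  calc ω * ‖loadSymbol L R γ (ω * I)‖ * β = β * ω * ‖loadSymbol L R γ (ω * I)‖ := by ring
    _ ≤ ‖(β * (ω * I) + 1 : ℂ)‖ * ‖loadSymbol L R γ (ω * I)‖ := by
        gcongr
        exact mul_le_norm_mul_I_add_one β ω
    _ = ‖coupledSymbol β L R γ (ω * I) - ω * I‖ := by rw [← norm_mul, hfactor]
    _ ≤ ‖coupledSymbol β L R γ (ω * I)‖ + ω := (norm_sub_le _ _).trans_eq (by rw [hω_norm])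
    _ ≤ (1 + C) * ‖coupledSymbol β L R γ (ω * I)‖ := by linarith [hC ω hω]

lemma mul_modeFreq_add_one_ne_zero (β Ω : ℝ) (k : ℕ) : β * modeFreq Ω k + 1 ≠ 0 := fun hzero => by
  simpa [modeFreq] using congrArg Complex.re hzero

lemma coupledSymbol_modeFreq_ne_zero (hβ : 0 < β) (hR : 0 ≤ R) (hL : 0 ≤ L) (hγ : 0 ≤ γ) {Ω : ℝ}
    (hΩ : 0 < Ω) {k : ℕ} (hk : k ≠ 0) : coupledSymbol β L R γ (modeFreq Ω k) ≠ 0 :=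
  coupledSymbol_ne_zero hβ hR hL hγ (by positivity)

lemma phaseMultiplier_zero (M : ℕ) (β L R γ Ω : ℝ) : phaseMultiplier M β L R γ 0 Ω = 0 := by
  simp [phaseMultiplier, modeFreq]

lemma continuousOn_phaseMultiplier (M : ℕ) (hβ : 0 < β) (hR : 0 ≤ R) (hL : 0 ≤ L) (hγ : 0 ≤ γ)
    (k : ℕ) : ContinuousOn (phaseMultiplier M β L R γ k) (Set.Ioi 0) := by
  rcases eq_or_ne k 0 with rfl | hk
  · exact continuousOn_const.congr fun Ω _ => phaseMultiplier_zero M β L R γ Ω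
  have hfreq : Continuous fun Ω => modeFreq Ω k := by
    unfold modeFreq
    fun_prop
  have hfreq_ne : ∀ Ω ∈ Set.Ioi (0 : ℝ), modeFreq Ω k ≠ 0 := fun Ω hΩ =>
    modeFreq_ne_zero (ne_of_gt hΩ) hk
  unfold phaseMultiplier
  split_ifs
  · refine ContinuousOn.div ?_ ?_ fun Ω hΩ =>
      mul_ne_zero (hfreq_ne Ω hΩ) (coupledSymbol_modeFreq_ne_zero hβ hR hL hγ hΩ hk)
    · unfold loadSymbol
      fun_prop
    · unfold coupledSymbol loadSymbol
      fun_prop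
  · exact continuousOn_const.div (by fun_prop) fun Ω hΩ =>
      mul_ne_zero (hfreq_ne Ω hΩ) (mul_modeFreq_add_one_ne_zero β Ω k)

lemma exists_norm_phaseMultiplier_le (M : ℕ) (hβ : 0 < β) (hR : 0 ≤ R) (hL : 0 ≤ L)
    (hγ : 0 ≤ γ) :
    ∃ C, 0 ≤ C ∧ ∀ Ω : ℝ, 0 < Ω → ∀ k : ℕ,
      ‖phaseMultiplier M β L R γ k Ω‖ ≤ C / (k * Ω) ^ 2 := by
  obtain ⟨C, hC⟩ := exists_mul_norm_loadSymbol_le hβ hR hL hγ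
  refine ⟨max C (1 / β), le_max_of_le_right (by positivity), fun Ω hΩ k => ?_⟩
  rcases eq_or_ne k 0 with rfl | hk
  · simp [phaseMultiplier_zero]
  have hω : 0 < k * Ω := by positivity
  rw [le_div_iff₀ (by positivity), phaseMultiplier]
  split_ifs
  · have hD := norm_pos_iff.2 (coupledSymbol_modeFreq_ne_zero (β := β) hβ hR hL hγ hΩ hk)
    rw [norm_div, norm_mul, norm_modeFreq, abs_of_pos hΩ, div_mul_eq_mul_div,
      div_le_iff₀ (by positivity)]
    calc ‖loadSymbol L R γ (modeFreq Ω k)‖ * (k * Ω) ^ 2 =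
          k * Ω * (k * Ω * ‖loadSymbol L R γ (modeFreq Ω k)‖) := by ring
      _ ≤ k * Ω * (C * ‖coupledSymbol β L R γ (modeFreq Ω k)‖) :=
          mul_le_mul_of_nonneg_left (hC (k * Ω) hω) hω.le
      _ ≤ k * Ω * (max C (1 / β) * ‖coupledSymbol β L R γ (modeFreq Ω k)‖) := by
          gcongr
          exact le_max_left _ _
      _ = max C (1 / β) * (k * Ω * ‖coupledSymbol β L R γ (modeFreq Ω k)‖) := by ring
  · have hjunction : β * (k * Ω) ≤ ‖(β * modeFreq Ω k + 1 : ℂ)‖ :=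
      mul_le_norm_mul_I_add_one β (k * Ω)
    have hpos : 0 < ‖(β * modeFreq Ω k + 1 : ℂ)‖ := (mul_pos hβ hω).trans_le hjunction
    refine le_max_of_le_right ?_
    rw [norm_div, norm_one, norm_mul, norm_modeFreq, abs_of_pos hΩ, div_mul_eq_mul_div,
      div_le_div_iff₀ (by positivity) hβ]
    nlinarith

lemma exists_norm_loadMultiplier_le (M : ℕ) (hβ : 0 < β) (hR : 0 ≤ R) (hL : 0 ≤ L)
    (hγ : 0 ≤ γ) :
    ∃ C, ∀ Ω : ℝ, 0 < Ω → ∀ k : ℕ, ‖loadMultiplier M β L R γ k Ω‖ ≤ C / Ω := by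
  obtain ⟨C, hC⟩ := exists_le_mul_norm_coupledSymbol hβ hR hL hγ
  have hC0 : 0 ≤ C := by
    by_contra! hneg
    linarith [hC 1 one_pos, mul_nonpos_of_nonpos_of_nonneg hneg.le
      (norm_nonneg (coupledSymbol β L R γ ((1 : ℝ) * I)))]
  refine ⟨C, fun Ω hΩ k => ?_⟩
  rw [loadMultiplier]
  split_ifs with hk
  · have hD := norm_pos_iff.2 (coupledSymbol_modeFreq_ne_zero (β := β) hβ hR hL hγ hΩ hk.1)
    rw [norm_div, norm_one, div_le_div_iff₀ hD hΩ, one_mul]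
    have hk1 : (1 : ℝ) ≤ k := by exact_mod_cast Nat.one_le_iff_ne_zero.2 hk.1
    exact (le_mul_of_one_le_left hΩ.le hk1).trans (hC (k * Ω) (by positivity))
  · rw [norm_zero]
    positivity

lemma phaseMultiplier_junction_eq (M : ℕ) (hβ : 0 < β) (hR : 0 ≤ R) (hL : 0 ≤ L) (hγ : 0 ≤ γ)
    {Ω : ℝ} (hΩ : 0 < Ω) {k : ℕ} (hk : k ≠ 0) :
    (β * modeFreq Ω k ^ 2 + modeFreq Ω k) * phaseMultiplier M β L R γ k Ω +
      modeFreq Ω k * loadMultiplier M β L R γ k Ω = 1 := by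
  have hz := modeFreq_ne_zero hΩ.ne' hk
  by_cases hM : M ∣ k
  · have hD := coupledSymbol_modeFreq_ne_zero (β := β) hβ hR hL hγ hΩ hk
    rw [phaseMultiplier, loadMultiplier, if_pos hM, if_pos ⟨hk, hM⟩]
    field_simp
    rw [coupledSymbol]
  · have hjunction := mul_modeFreq_add_one_ne_zero β Ω k
    rw [phaseMultiplier, loadMultiplier, if_neg hM, if_neg fun h => hM h.2]
    field_simp
    ring

lemma loadSymbol_mul_loadMultiplier (M : ℕ) (β L R γ : ℝ) {Ω : ℝ} (hΩ : Ω ≠ 0) (k : ℕ) :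
    loadSymbol L R γ (modeFreq Ω k) * loadMultiplier M β L R γ k Ω =
      if M ∣ k then modeFreq Ω k * phaseMultiplier M β L R γ k Ω else 0 := by
  rcases eq_or_ne k 0 with rfl | hk
  · simp [loadMultiplier, phaseMultiplier_zero]
  by_cases hM : M ∣ k
  · have hz := modeFreq_ne_zero hΩ hk
    rw [phaseMultiplier, loadMultiplier, if_pos hM, if_pos ⟨hk, hM⟩, if_pos hM, mul_one_div,
      ← mul_div_assoc, mul_div_mul_left _ _ hz]
  · rw [loadMultiplier, if_neg fun h => hM h.2, if_neg hM, mul_zero]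

end Multipliers

section DriftingSeries

/-- An affine function plus a trigonometric series of frequency `Ω`: the form of the phase and of
the charge. -/
noncomputable def driftingSeries (A B Ω : ℝ) (a : ℕ → ℂ) (t : ℝ) : ℝ :=
  A + B * t + trigSeries a (Ω * t)

/-- The coefficients of the time derivative of `t ↦ trigSeries a (Ω * t)`. -/
noncomputable def modalDeriv (Ω : ℝ) (a : ℕ → ℂ) (k : ℕ) : ℂ := modeFreq Ω k * a k

variable {A B Ω : ℝ} {a : ℕ → ℂ}

lemma RapidDecay.modalDeriv (ha : RapidDecay a) (Ω : ℝ) : RapidDecay (modalDeriv Ω a) :=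
  ha.of_norm_le (C := |Ω|) 1 fun k => by
    rw [_root_.modalDeriv, norm_mul, norm_modeFreq, pow_one, mul_comm |Ω|]

lemma deriv_driftingSeries (ha : RapidDecay a) (A B Ω : ℝ) :
    deriv (driftingSeries A B Ω a) = driftingSeries B 0 Ω (modalDeriv Ω a) := by
  funext t
  have hchain := (hasDerivAt_trigSeries (ha 1) (Ω * t)).comp t ((hasDerivAt_id t).const_mul Ω)
  have hcoeff : modalDeriv Ω a = Ω • fun k : ℕ => (k * Complex.I * a k : ℂ) := by
    funext k
    rw [modalDeriv, modeFreq, Pi.smul_apply, Complex.real_smul]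
    push_cast
    ring
  have hderiv : deriv (driftingSeries A B Ω a) t = _ :=
    ((((hasDerivAt_id t).const_mul B).const_add A).add hchain).deriv
  rw [hderiv, driftingSeries, hcoeff, trigSeries_smul]
  ring

lemma deriv_deriv_driftingSeries (ha : RapidDecay a) (A B Ω : ℝ) :
    deriv (deriv (driftingSeries A B Ω a)) =
      driftingSeries 0 0 Ω (modalDeriv Ω (modalDeriv Ω a)) := by
  rw [deriv_driftingSeries ha, deriv_driftingSeries (ha.modalDeriv Ω)]

lemma contDiff_driftingSeries (ha : RapidDecay a) (A B Ω : ℝ) (n : ℕ) :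
    ContDiff ℝ n (driftingSeries A B Ω a) := by
  have hseries : ContDiff ℝ n fun t => trigSeries a (Ω * t) :=
    (contDiff_trigSeries (ha n)).comp (contDiff_const.mul contDiff_id)
  exact (contDiff_const.add (contDiff_const.mul contDiff_id)).add hseries

lemma isRunning_driftingSeries (hΩ : Ω ≠ 0) (A : ℝ) (a : ℕ → ℂ) :
    IsRunning (driftingSeries A Ω Ω a) (2 * π / Ω) := fun t => by
  have hphase : Ω * (t + 2 * π / Ω) = Ω * t + 2 * π := by field_simp
  rw [driftingSeries, hphase, trigSeries_periodic a, driftingSeries]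
  ring

lemma driftingSeries_periodic {M : ℕ} (hM : M ≠ 0) (hΩ : Ω ≠ 0) (A : ℝ)
    (ha : ∀ k, ¬ M ∣ k → a k = 0) :
    Function.Periodic (driftingSeries A 0 Ω a) (2 * π / Ω / M) := fun t => by
  have hphase : Ω * (t + 2 * π / Ω / M) = Ω * t + 2 * π / M := by field_simp
  rw [driftingSeries, hphase, trigSeries_periodic_of_forall_not_dvd hM ha, driftingSeries, zero_mul,
    zero_mul]

lemma sum_driftingSeries_sub {M : ℕ} (hM : M ≠ 0) (hΩ : Ω ≠ 0) (A : ℝ)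
    (ha : Summable fun k => ‖a k‖) (t : ℝ) :
    ∑ j ∈ Finset.range M, driftingSeries A 0 Ω a (t - j * (2 * π / Ω) / M) =
      M * (A + trigSeries (fun k => if M ∣ k then a k else 0) (Ω * t)) := by
  have hphase (j : ℕ) : Ω * (t - j * (2 * π / Ω) / M) = Ω * t - j * (2 * π / M) := by
    field_simp
  simp only [driftingSeries, hphase, zero_mul, add_zero, Finset.sum_add_distrib,
    sum_trigSeries_sub_eq hM ha, Finset.sum_const, Finset.card_range, nsmul_eq_mul, mul_add]

end DriftingSeries

section SingleWaveform

/-- The coefficients of the oscillating part of the phase driven by the forcing `-σ`. -/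
noncomputable def phaseCoeff (M : ℕ) (β L R γ Ω : ℝ) (σ : ℕ → ℂ) (k : ℕ) : ℂ :=
  -(σ k * phaseMultiplier M β L R γ k Ω)

/-- The coefficients of the oscillating part of the charge driven by the forcing `-σ`. -/
noncomputable def loadCoeff (M : ℕ) (β L R γ Ω : ℝ) (σ : ℕ → ℂ) (k : ℕ) : ℂ :=
  -(σ k * loadMultiplier M β L R γ k Ω)

variable {M : ℕ} {β L R γ Ω : ℝ} {σ : ℕ → ℂ}

lemma loadCoeff_eq_zero_of_not_dvd (β L R γ Ω : ℝ) (σ : ℕ → ℂ) {k : ℕ} (hk : ¬ M ∣ k) :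
    loadCoeff M β L R γ Ω σ k = 0 := by
  rw [loadCoeff, loadMultiplier, if_neg fun h => hk h.2, mul_zero, neg_zero]

lemma RapidDecay.loadCoeff (hσ : RapidDecay σ) (M : ℕ) (hβ : 0 < β) (hR : 0 ≤ R) (hL : 0 ≤ L)
    (hγ : 0 ≤ γ) (hΩ : 0 < Ω) : RapidDecay (loadCoeff M β L R γ Ω σ) := by
  obtain ⟨C, hC⟩ := exists_norm_loadMultiplier_le M hβ hR hL hγ
  refine hσ.of_norm_le (C := C / Ω) 0 fun k => ?_
  rw [_root_.loadCoeff, norm_neg, norm_mul, pow_zero, mul_one, mul_comm]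
  exact mul_le_mul_of_nonneg_right (hC Ω hΩ k) (norm_nonneg _)

lemma trigSeries_junction_eq (M : ℕ) (hβ : 0 < β) (hR : 0 ≤ R) (hL : 0 ≤ L) (hγ : 0 ≤ γ)
    (hΩ : 0 < Ω) (hσ : RapidDecay σ) (hu : RapidDecay (phaseCoeff M β L R γ Ω σ)) (θ : ℝ) :
    β * trigSeries (modalDeriv Ω (modalDeriv Ω (phaseCoeff M β L R γ Ω σ))) θ +
      trigSeries (modalDeriv Ω (phaseCoeff M β L R γ Ω σ)) θ + trigSeries σ θ +
      trigSeries (modalDeriv Ω (loadCoeff M β L R γ Ω σ)) θ = (σ 0).re := by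
  have hq' := (hσ.loadCoeff M hβ hR hL hγ hΩ).modalDeriv Ω
  have hu' := hu.modalDeriv Ω
  have hu'' := (hu'.modalDeriv Ω).smul β
  rw [← trigSeries_smul, ← trigSeries_add hu''.summable_norm hu'.summable_norm,
    ← trigSeries_add (hu''.add hu').summable_norm hσ.summable_norm,
    ← trigSeries_add ((hu''.add hu').add hσ).summable_norm hq'.summable_norm,
    trigSeries_of_forall_ne_zero]
  · simp [modalDeriv, modeFreq]
  · intro k hk
    simp only [Pi.add_apply, Pi.smul_apply, Complex.real_smul, modalDeriv, phaseCoeff, loadCoeff]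
    linear_combination -σ k * phaseMultiplier_junction_eq M hβ hR hL hγ hΩ hk

lemma trigSeries_load_eq (hΩ : Ω ≠ 0) (hq : RapidDecay (loadCoeff M β L R γ Ω σ)) (θ : ℝ) :
    L * trigSeries (modalDeriv Ω (modalDeriv Ω (loadCoeff M β L R γ Ω σ))) θ +
      R * trigSeries (modalDeriv Ω (loadCoeff M β L R γ Ω σ)) θ +
      γ * trigSeries (loadCoeff M β L R γ Ω σ) θ =
      trigSeries (fun k => if M ∣ k then modalDeriv Ω (phaseCoeff M β L R γ Ω σ) k else 0) θ := by
  have hq' := (hq.modalDeriv Ω).smul R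
  have hq'' := ((hq.modalDeriv Ω).modalDeriv Ω).smul L
  rw [← trigSeries_smul, ← trigSeries_smul, ← trigSeries_smul,
    ← trigSeries_add hq''.summable_norm hq'.summable_norm,
    ← trigSeries_add (hq''.add hq').summable_norm (hq.smul γ).summable_norm]
  congr 1
  funext k
  have hmode := loadSymbol_mul_loadMultiplier M β L R γ hΩ k
  simp only [Pi.add_apply, Pi.smul_apply, Complex.real_smul, modalDeriv, phaseCoeff, loadCoeff]
  rw [loadSymbol] at hmode
  split_ifs at hmode ⊢ <;> linear_combination -σ k * hmode

-- The drift of the charge balances the mean current `Ω`: through the resistor if `γ = 0`, and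
-- through a constant charge otherwise.
lemma exists_drift (hγ : 0 ≤ γ) (hRγ : 0 < R + γ) :
    ∃ κ : ℝ, 0 < κ ∧ ∀ Ω : ℝ, ∃ A B : ℝ, κ * Ω = Ω + B ∧ R * B + γ * A = Ω ∧ γ * B = 0 := by
  rcases hγ.eq_or_lt with rfl | hγ_pos
  · have hR_pos : 0 < R := by rwa [add_zero] at hRγ
    exact ⟨1 + 1 / R, by positivity, fun Ω =>
      ⟨0, Ω / R, by ring, by rw [zero_mul, add_zero, mul_div_cancel₀ _ hR_pos.ne'], zero_mul _⟩⟩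
  · exact ⟨1, one_pos, fun Ω =>
      ⟨Ω / γ, 0, by ring, by rw [mul_zero, zero_add, mul_div_cancel₀ _ hγ_pos.ne'], mul_zero _⟩⟩

lemma exists_forcing (M : ℕ) {I κ : ℝ} (hI : 1 < I) (hκ : 0 < κ) (hβ : 0 < β) (hR : 0 ≤ R)
    (hL : 0 ≤ L) (hγ : 0 ≤ γ) :
    ∃ (Ω : ℝ) (σ : ℕ → ℂ), 0 < Ω ∧ κ * Ω + (σ 0).re = I ∧ RapidDecay σ ∧
      RapidDecay (phaseCoeff M β L R γ Ω σ) ∧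
      ∀ θ, trigSeries σ θ = sin (θ + trigSeries (phaseCoeff M β L R γ Ω σ) θ) := by
  obtain ⟨C, hC0, hC⟩ := exists_norm_phaseMultiplier_le M hβ hR hL hγ
  have hΩ₁ : 0 < (I - 1) / κ := div_pos (sub_pos.2 hI) hκ
  refine exists_trigSeries_eq_comp_add_trigSeries (C := C / ((I - 1) / κ) ^ 2) contDiff_sin
    sin_periodic one_pos abs_sin_le_one hI hκ (continuousOn_phaseMultiplier M hβ hR hL hγ)
    fun Ω hΩ k => (hC Ω (hΩ₁.trans_le hΩ) k).trans ?_
  rw [mul_pow, ← div_div, div_right_comm]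
  gcongr

theorem exists_singleWaveform (hM : M ≠ 0) {I : ℝ} (hI : 1 < I) (hβ : 0 < β) (hR : 0 ≤ R)
    (hL : 0 ≤ L) (hγ : 0 ≤ γ) (hRγ : 0 < R + γ) :
    ∃ (T : ℝ) (φ Q : ℝ → ℝ), 0 < T ∧ ContDiff ℝ 2 φ ∧ ContDiff ℝ 2 Q ∧ IsRunning φ T ∧
      Function.Periodic (deriv Q) (T / M) ∧
      (∀ t, β * deriv (deriv φ) t + deriv φ t + sin (φ t) + deriv Q t = I) ∧
      ∀ t, L * deriv (deriv Q) t + R * deriv Q t + γ * Q t =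
        1 / M * ∑ j ∈ Finset.range M, deriv φ (t - j * T / M) := by
  obtain ⟨κ, hκ, hdrift⟩ := exists_drift hγ hRγ
  obtain ⟨Ω, σ, hΩ, hmean, hσ, hu, hsin⟩ := exists_forcing M hI hκ hβ hR hL hγ
  obtain ⟨A, B, hκB, hAB, hγB⟩ := hdrift Ω
  have hq := hσ.loadCoeff M hβ hR hL hγ hΩ
  refine ⟨2 * π / Ω, driftingSeries 0 Ω Ω (phaseCoeff M β L R γ Ω σ),
    driftingSeries A B Ω (loadCoeff M β L R γ Ω σ), by positivity,
    contDiff_driftingSeries hu 0 Ω Ω 2, contDiff_driftingSeries hq A B Ω 2,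
    isRunning_driftingSeries hΩ.ne' 0 _, ?_, fun t => ?_, fun t => ?_⟩
  · rw [deriv_driftingSeries hq]
    refine driftingSeries_periodic hM hΩ.ne' B fun k hk => ?_
    rw [modalDeriv, loadCoeff_eq_zero_of_not_dvd β L R γ Ω σ hk, mul_zero]
  · rw [deriv_deriv_driftingSeries hu, deriv_driftingSeries hu, deriv_driftingSeries hq]
    simp only [driftingSeries, zero_add, zero_mul, add_zero]
    rw [← hsin]
    linear_combination trigSeries_junction_eq M hβ hR hL hγ hΩ hσ hu (Ω * t) + hmean - hκB
  · rw [deriv_deriv_driftingSeries hq, deriv_driftingSeries hu, deriv_driftingSeries hq,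
      sum_driftingSeries_sub hM hΩ.ne' Ω (hu.modalDeriv Ω).summable_norm,
      ← trigSeries_load_eq hΩ.ne' hq, one_div, inv_mul_cancel_left₀ (Nat.cast_ne_zero.2 hM)]
    simp only [driftingSeries]
    linear_combination hAB + t * hγB

lemma sum_fin_mul_div_eq {E : Type*} [AddCommMonoid E] (M l : ℕ) (g : ℕ → E) :
    ∑ j : Fin (M * l), g (j / l) = l • ∑ h ∈ Finset.range M, g h := by
  rw [Fin.sum_univ_eq_sum_range (fun j => g (j / l)) (M * l)]
  induction M with
  | zero => simp
  | succ M ih =>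
    have hblock : ∀ x ∈ Finset.range l, g ((M * l + x) / l) = g M := fun x hx => by
      have hxl := Finset.mem_range.1 hx
      rw [mul_comm M, Nat.mul_add_div (Nat.zero_lt_of_lt hxl), Nat.div_eq_of_lt hxl, add_zero]
    rw [Finset.sum_range_succ, smul_add, ← ih, Nat.succ_mul, Finset.sum_range_add,
      Finset.sum_congr rfl hblock, Finset.sum_const, Finset.card_range]

lemma jjSystem_of_singleWaveform {l : ℕ} (hl : l ≠ 0) {I T : ℝ} {φ Q : ℝ → ℝ}
    (hQ : Function.Periodic (deriv Q) (T / M))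
    (hjunction : ∀ t, β * deriv (deriv φ) t + deriv φ t + sin (φ t) + deriv Q t = I)
    (hload : ∀ t, L * deriv (deriv Q) t + R * deriv Q t + γ * Q t =
      1 / M * ∑ j ∈ Finset.range M, deriv φ (t - j * T / M)) :
    JJSystem (M * l) β I L R γ (fun j t => φ (t - ((j / l : ℕ) : ℝ) * T / M)) Q := by
  have hshift (f : ℝ → ℝ) (c : ℝ) : deriv (fun t => f (t - c)) = fun t => deriv f (t - c) :=
    funext fun t => deriv_comp_sub_const f c t
  refine ⟨fun k t => ?_, fun t => ?_⟩
  · have hperiod := hQ.sub_nat_mul_eq (x := t) (k / l)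
    rw [← mul_div_assoc] at hperiod
    simpa only [hshift, hperiod] using hjunction (t - ((k / l : ℕ) : ℝ) * T / M)
  · simp only [hshift]
    rw [sum_fin_mul_div_eq M l fun h => deriv φ (t - h * T / M), nsmul_eq_mul, ← mul_assoc, hload]
    congr 1
    push_cast
    field_simp

end SingleWaveform

/-- **Theorem 1 (Aronson–Huang).** For any divisor `M` of `N` with `l = N / M`, bias
current `I > 1`, junction capacitance `β > 0` and load parameters `L, R, γ ≥ 0` with
`R + γ > 0`, there exists an `(l, M, N)` single waveform solution of the Josephson
junction system with LRC load: a running waveform `φ` of period `T > 0` and a load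
charge `Q` with `T/M`-periodic load current `Q'` satisfying
`β φ'' + φ' + sin φ + Q' = I` and
`L Q'' + R Q' + γ Q = (l/N) ∑_{j=0}^{M-1} φ'(t − j T / M)`; equivalently the tuple
`φ_j(t) = φ(t − hT/M)` for `j = hl+1, …, (h+1)l` together with `Q` solves the system. -/
theorem exists_lMN_swfs (N M : ℕ) (hN : 1 ≤ N) (hM : M ∣ N) (l : ℕ) (hl : l = N / M)
    (β I L R γ : ℝ) (hI : 1 < I) (hβ : 0 < β)
    (hR : 0 ≤ R) (hL : 0 ≤ L) (hγ : 0 ≤ γ) (hRγ : 0 < R + γ) :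
    ∃ (T : ℝ) (φ Q : ℝ → ℝ), 0 < T ∧
      ContDiff ℝ 2 φ ∧ ContDiff ℝ 2 Q ∧
      IsRunning φ T ∧
      (∀ t : ℝ, deriv Q (t + T / (M : ℝ)) = deriv Q t) ∧
      (∀ t : ℝ, β * deriv (deriv φ) t + deriv φ t + Real.sin (φ t) + deriv Q t = I) ∧
      (∀ t : ℝ, L * deriv (deriv Q) t + R * deriv Q t + γ * Q t
          = ((l : ℝ) / (N : ℝ)) *
              ∑ j ∈ Finset.range M, deriv φ (t - (j : ℝ) * T / (M : ℝ))) ∧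
      JJSystem N β I L R γ
        (fun j t => φ (t - (((j : ℕ) / l : ℕ) : ℝ) * T / (M : ℝ))) Q := by
  obtain ⟨m, rfl⟩ := hM
  have hM0 : M ≠ 0 := by rintro rfl; simp at hN
  obtain rfl : l = m := by rw [hl, Nat.mul_div_cancel_left _ (Nat.pos_of_ne_zero hM0)]
  have hl0 : l ≠ 0 := by rintro rfl; simp at hN
  have hfrac : (l : ℝ) / ((M * l : ℕ) : ℝ) = 1 / M := by
    push_cast
    field_simp
  obtain ⟨T, φ, Q, hT, hφ, hQ, hrunning, hperiodic, hjunction, hload⟩ :=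
    exists_singleWaveform hM0 hI hβ hR hL hγ hRγ
  exact ⟨T, φ, Q, hT, hφ, hQ, hrunning, hperiodic, hjunction,
    fun t => by rw [hfrac, hload t], jjSystem_of_singleWaveform hl0 hperiodic hjunction hload⟩
end

section
/- (Damped driven pendulum) Let β ≥ 0 and I > 1. Then the pendulum equation β φ'' + φ' + sin(φ) = I possesses a running solution φ₀ of some period T₀ > 0 with φ₀'(t) > 0 for all t, and φ₀ is uniquely determined by the phase condition φ₀(0) = 0: any running solution of the equation with positive derivative and value 0 at t = 0 coincides with φ₀, and has the same period T₀. -/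
open Real

/-- `φ` is a running solution of (minimal) period `T` of the damped driven pendulum
equation `β φ'' + φ' + sin φ = I`: it solves the equation on all of `ℝ`, satisfies
`φ(t + T) = φ(t) + 2π` for all `t`, and `T` is the minimal positive number with this
property. -/
def IsPendulumRunningSol (β I : ℝ) (φ : ℝ → ℝ) (T : ℝ) : Prop :=
  ContDiff ℝ 2 φ ∧
  (∀ t : ℝ, β * deriv (deriv φ) t + deriv φ t + Real.sin (φ t) = I) ∧
  0 < T ∧ (∀ t : ℝ, φ (t + T) = φ t + 2 * Real.pi) ∧
  (∀ T' : ℝ, 0 < T' → (∀ t : ℝ, φ (t + T') = φ t + 2 * Real.pi) → T ≤ T')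

/-! For `β φ'' + φ' = F(φ)` with `F` positive and periodic, look for solutions whose velocity is a
positive periodic function `v` of their position, `φ' = v(φ)`. Such a profile has to solve
`β v v' + v = F`.

For `β > 0` the profile equation reads `v' = (F / v - 1) / β`. Adding `l v` with `l` large to both
sides and inverting `u ↦ u' + l u` on bounded functions turns a positive periodic profile into the
fixed point of a contraction. The case `β < 0` follows by reflecting the phase, and for `β = 0` the
profile is `F`. Integrating `φ' = v(φ)` gives a running solution.

Given such a `v` and any running solution `φ`, the periodic function `d = φ' - v(φ)` satisfies
`β v(φ) d' = -F(φ) d`. Hence `d` vanishes at its critical points, in particular at its maximum and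
its minimum, so `d = 0` and `φ` solves the same first-order equation. -/

open Set MeasureTheory
open scoped BoundedContinuousFunction NNReal

section PeriodicExtrema

variable {f : ℝ → ℝ} {P : ℝ}

lemma exists_forall_le_of_periodic (hper : Function.Periodic f P) (hP : P ≠ 0)
    (hf : Continuous f) : ∃ x, ∀ y, f y ≤ f x := by
  obtain ⟨_, ⟨x, rfl⟩, hx⟩ :=
    (hper.compact_of_continuous hP hf).exists_isGreatest (range_nonempty f)
  exact ⟨x, fun y ↦ hx (mem_range_self y)⟩

lemma exists_forall_ge_of_periodic (hper : Function.Periodic f P) (hP : P ≠ 0)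
    (hf : Continuous f) : ∃ x, ∀ y, f x ≤ f y := by
  obtain ⟨_, ⟨x, rfl⟩, hx⟩ :=
    (hper.compact_of_continuous hP hf).exists_isLeast (range_nonempty f)
  exact ⟨x, fun y ↦ hx (mem_range_self y)⟩

lemma eq_zero_of_periodic_of_deriv_eq_zero_imp (hper : Function.Periodic f P) (hP : P ≠ 0)
    (hf : Continuous f) (hcrit : ∀ x, deriv f x = 0 → f x = 0) (x : ℝ) : f x = 0 := by
  obtain ⟨a, ha⟩ := exists_forall_le_of_periodic hper hP hf
  obtain ⟨b, hb⟩ := exists_forall_ge_of_periodic hper hP hf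
  have hfa : f a = 0 := hcrit a (IsLocalMax.deriv_eq_zero (.of_forall ha))
  have hfb : f b = 0 := hcrit b (IsLocalMin.deriv_eq_zero (.of_forall hb))
  exact le_antisymm (hfa ▸ ha x) (hfb ▸ hb x)

end PeriodicExtrema

section Relaxation

/-- The bounded solution `u` of the relaxation equation `u' + l u = g`, for `l > 0` and `g`
bounded. It is written as an average of the translates of `g`, from which periodicity is
immediate. -/
noncomputable def relaxation (l : ℝ) (g : ℝ →ᵇ ℝ) (x : ℝ) : ℝ :=
  ∫ s in Iic 0, exp (l * s) * g (x + s)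

variable {l : ℝ}

lemma integrableOn_exp_mul_boundedContinuousFunction (hl : 0 < l) (g : ℝ →ᵇ ℝ) (c : ℝ) :
    IntegrableOn (fun s ↦ exp (l * s) * g s) (Iic c) :=
  (integrableOn_exp_mul_Iic hl c).mul_bdd g.continuous.aestronglyMeasurable
    (.of_forall g.norm_coe_le_norm)

lemma integrableOn_relaxation (hl : 0 < l) (g : ℝ →ᵇ ℝ) (x : ℝ) :
    IntegrableOn (fun s ↦ exp (l * s) * g (x + s)) (Iic 0) :=
  integrableOn_exp_mul_boundedContinuousFunction hl
    (g.compContinuous ⟨fun s ↦ x + s, by fun_prop⟩) 0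

lemma relaxation_periodic {P : ℝ} {g : ℝ →ᵇ ℝ} (hg : Function.Periodic g P) :
    Function.Periodic (relaxation l g) P := fun x ↦ by
  simp only [relaxation, add_right_comm x P, hg _]

lemma relaxation_const (hl : 0 < l) (c x : ℝ) :
    relaxation l (BoundedContinuousFunction.const ℝ (l * c)) x = c := by
  simp only [relaxation, BoundedContinuousFunction.const_apply]
  rw [integral_mul_const, integral_exp_mul_Iic hl, mul_zero, exp_zero]
  field_simp

lemma relaxation_mono (hl : 0 < l) {g₁ g₂ : ℝ →ᵇ ℝ} (h : ∀ x, g₁ x ≤ g₂ x) (x : ℝ) :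
    relaxation l g₁ x ≤ relaxation l g₂ x :=
  integral_mono (integrableOn_relaxation hl g₁ x) (integrableOn_relaxation hl g₂ x)
    fun _ ↦ mul_le_mul_of_nonneg_left (h _) (exp_pos _).le

lemma relaxation_mem_Icc (hl : 0 < l) {m M : ℝ} {g : ℝ →ᵇ ℝ}
    (hg : ∀ x, g x ∈ Icc (l * m) (l * M)) (x : ℝ) : relaxation l g x ∈ Icc m M := by
  rw [mem_Icc, ← relaxation_const hl m x, ← relaxation_const hl M x]
  exact ⟨relaxation_mono hl (fun y ↦ (hg y).1) x, relaxation_mono hl (fun y ↦ (hg y).2) x⟩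

lemma relaxation_sub (hl : 0 < l) (g₁ g₂ : ℝ →ᵇ ℝ) (x : ℝ) :
    relaxation l (g₁ - g₂) x = relaxation l g₁ x - relaxation l g₂ x := by
  simp only [relaxation, BoundedContinuousFunction.coe_sub, Pi.sub_apply, mul_sub]
  exact integral_sub (integrableOn_relaxation hl g₁ x) (integrableOn_relaxation hl g₂ x)

lemma dist_relaxation_le (hl : 0 < l) (g₁ g₂ : ℝ →ᵇ ℝ) (x : ℝ) :
    dist (relaxation l g₁ x) (relaxation l g₂ x) ≤ dist g₁ g₂ / l := by
  rw [Real.dist_eq, ← relaxation_sub hl, abs_le, ← mem_Icc]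
  refine relaxation_mem_Icc hl (fun y ↦ ?_) x
  rw [mul_neg, mul_div_cancel₀ _ hl.ne', mem_Icc, ← abs_le]
  exact BoundedContinuousFunction.dist_coe_le_dist (f := g₁) (g := g₂) y

lemma relaxation_eq_exp_mul_integral (l : ℝ) (g : ℝ →ᵇ ℝ) (x : ℝ) :
    relaxation l g x = exp (-l * x) * ∫ s in Iic x, exp (l * s) * g s := by
  have hshift := (measurePreserving_add_left volume x).setIntegral_preimage_emb
    (measurableEmbedding_addLeft x) (fun s ↦ exp (l * s) * g s) (Iic x)
  rw [preimage_const_add_Iic, sub_self] at hshift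
  rw [← hshift, ← integral_const_mul, relaxation]
  congr 1 with s
  rw [← mul_assoc, ← exp_add]
  ring_nf

lemma hasDerivAt_relaxation (hl : 0 < l) (g : ℝ →ᵇ ℝ) (x : ℝ) :
    HasDerivAt (relaxation l g) (g x - l * relaxation l g x) x := by
  have hcont : Continuous fun s ↦ exp (l * s) * g s := by fun_prop
  have hint := integrableOn_exp_mul_boundedContinuousFunction hl g
  have hsplit : (fun y ↦ ∫ s in Iic y, exp (l * s) * g s) = fun y ↦
      (∫ s in (0 : ℝ)..y, exp (l * s) * g s) + ∫ s in Iic 0, exp (l * s) * g s := by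
    ext y
    rw [← intervalIntegral.integral_Iic_sub_Iic (hint 0) (hint y), sub_add_cancel]
  have hintegral : HasDerivAt (fun y ↦ ∫ s in Iic y, exp (l * s) * g s) (exp (l * x) * g x) x :=
    hsplit ▸ (hcont.integral_hasStrictDerivAt 0 x).hasDerivAt.add_const _
  have hexp : HasDerivAt (fun y ↦ exp (-l * y)) (exp (-l * x) * -l) x := by
    simpa using ((hasDerivAt_id x).const_mul (-l)).exp
  have hcancel : exp (-l * x) * exp (l * x) = 1 := by
    rw [← exp_add, neg_mul, neg_add_cancel, exp_zero]
  rw [funext (relaxation_eq_exp_mul_integral l g)]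
  refine (hexp.mul hintegral).congr_deriv ?_
  linear_combination g x * hcancel

end Relaxation

section PeriodicSolution

/-- The `P`-periodic bounded continuous functions with values in `[m, M]`. -/
def periodicBand (P m M : ℝ) : Set (ℝ →ᵇ ℝ) :=
  {v | Function.Periodic v P ∧ ∀ x, v x ∈ Icc m M}

lemma isClosed_periodicBand (P m M : ℝ) : IsClosed (periodicBand P m M) := by
  have heval (x : ℝ) : Continuous fun v : ℝ →ᵇ ℝ ↦ v x := continuous_eval_const x
  simp only [periodicBand, Function.Periodic, ofPred_and, ofPred_forall]
  exact (isClosed_iInter fun x ↦ isClosed_eq (heval _) (heval x)).inter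
    (isClosed_iInter fun x ↦ isClosed_Icc.preimage (heval x))

lemma exists_mem_periodicBand_coe_eq {P m M : ℝ} {f : ℝ → ℝ} (hf : Continuous f)
    (hper : Function.Periodic f P) (hmem : ∀ x, f x ∈ Icc m M) :
    ∃ v ∈ periodicBand P m M, ⇑v = f := by
  refine ⟨.ofNormedAddCommGroup f hf (max |m| |M|) fun x ↦ ?_, ⟨hper, hmem⟩, rfl⟩
  exact abs_le_max_abs_abs (hmem x).1 (hmem x).2

variable {P l m M : ℝ} {k : ℝ≥0} {h : ℝ → ℝ → ℝ}

lemma exists_contractingWith_periodicBand (hk : k < l)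
    (hcont : ContinuousOn (Function.uncurry h) (univ ×ˢ Icc m M))
    (hper : ∀ y, Function.Periodic (h · y) P)
    (hmaps : ∀ x, MapsTo (h x) (Icc m M) (Icc (l * m) (l * M)))
    (hlip : ∀ x, LipschitzOnWith k (h x) (Icc m M)) :
    ∃ S : periodicBand P m M → periodicBand P m M, ContractingWith (k / l.toNNReal) S ∧
      ∀ v x, HasDerivAt (S v).1 (h x (v.1 x) - l * (S v).1 x) x := by
  have hl : 0 < l := k.coe_nonneg.trans_lt hk
  choose g hg hg_eq using fun v : periodicBand P m M ↦
    exists_mem_periodicBand_coe_eq (f := fun x ↦ h x (v.1 x)) (P := P)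
      (hcont.comp_continuous (by fun_prop : Continuous fun x ↦ (x, v.1 x))
        fun x ↦ ⟨mem_univ x, v.2.2 x⟩)
      (fun x ↦ by simp only [v.2.1 x, hper _ x]) (fun x ↦ hmaps x (v.2.2 x))
  have hderiv v x := hasDerivAt_relaxation hl (g v) x
  choose S hS hS_eq using fun v ↦
    exists_mem_periodicBand_coe_eq
      (continuous_iff_continuousAt.2 fun x ↦ (hderiv v x).continuousAt)
      (relaxation_periodic (hg v).1) (relaxation_mem_Icc hl (hg v).2)
  refine ⟨fun v ↦ ⟨S v, hS v⟩, ⟨?_, .of_dist_le_mul fun v w ↦ ?_⟩, fun v x ↦ ?_⟩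
  · exact NNReal.div_lt_one_of_lt (Real.lt_toNNReal_iff_coe_lt.2 hk)
  · have hsource : dist (g v) (g w) ≤ k * dist v w := by
      refine (BoundedContinuousFunction.dist_le (by positivity)).2 fun x ↦ ?_
      rw [hg_eq, hg_eq]
      exact ((hlip x).dist_le_mul _ (v.2.2 x) _ (w.2.2 x)).trans
        (mul_le_mul_of_nonneg_left (BoundedContinuousFunction.dist_coe_le_dist x) k.coe_nonneg)
    rw [Subtype.dist_eq, NNReal.coe_div, Real.coe_toNNReal l hl.le, div_mul_eq_mul_div]
    refine (BoundedContinuousFunction.dist_le (by positivity)).2 fun x ↦ ?_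
    rw [hS_eq, hS_eq]
    exact (dist_relaxation_le hl _ _ x).trans (by gcongr)
  · simpa only [hS_eq, hg_eq] using hderiv v x

theorem exists_periodic_hasDerivAt_sub_mul (hk : k < l) (hmM : m ≤ M)
    (hcont : ContinuousOn (Function.uncurry h) (univ ×ˢ Icc m M))
    (hper : ∀ y, Function.Periodic (h · y) P)
    (hmaps : ∀ x, MapsTo (h x) (Icc m M) (Icc (l * m) (l * M)))
    (hlip : ∀ x, LipschitzOnWith k (h x) (Icc m M)) :
    ∃ v : ℝ → ℝ, Function.Periodic v P ∧ (∀ x, v x ∈ Icc m M) ∧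
      ∀ x, HasDerivAt v (h x (v x) - l * v x) x := by
  obtain ⟨S, hS, hderiv⟩ := exists_contractingWith_periodicBand hk hcont hper hmaps hlip
  have : CompleteSpace (periodicBand P m M) := (isClosed_periodicBand P m M).completeSpace_coe
  have : Nonempty (periodicBand P m M) :=
    ⟨.const ℝ m, fun _ ↦ rfl, fun _ ↦ left_mem_Icc.2 hmM⟩
  have hfix : S (hS.fixedPoint S) = hS.fixedPoint S := hS.fixedPoint_isFixedPt
  exact ⟨(hS.fixedPoint S).1, (hS.fixedPoint S).2.1, (hS.fixedPoint S).2.2,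
    fun x ↦ by simpa only [hfix] using hderiv (hS.fixedPoint S) x⟩

end PeriodicSolution

section ShiftedSlope

/-- The slope `(y / v - 1) / β` prescribed by the profile equation `β v v' + v = y`, shifted by
`l v` to make it increasing in `v`. -/
noncomputable def shiftedSlope (β l y v : ℝ) : ℝ := (y / v - 1) / β + l * v

variable {β l y m M v w : ℝ}

lemma shiftedSlope_sub (hβ : β ≠ 0) (hv : v ≠ 0) (hw : w ≠ 0) :
    shiftedSlope β l y v - shiftedSlope β l y w = (l - y / (β * v * w)) * (v - w) := by
  unfold shiftedSlope
  field_simp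
  ring

lemma div_mul_mul_mem_Icc (hβ : 0 < β) (hm : 0 < m) (hy : y ∈ Icc m M) (hv : v ∈ Icc m M)
    (hw : w ∈ Icc m M) : y / (β * v * w) ∈ Icc (m / (β * M * M)) (M / (β * m * m)) := by
  obtain ⟨hmy, hyM⟩ := hy
  obtain ⟨hmv, hvM⟩ := hv
  obtain ⟨hmw, hwM⟩ := hw
  have hv0 : 0 < v := hm.trans_le hmv
  have hw0 : 0 < w := hm.trans_le hmw
  have hy0 : 0 < y := hm.trans_le hmy
  have hM0 : 0 < M := hv0.trans_le hvM
  constructor <;> gcongr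

lemma shiftedSlope_lipschitzOnWith (hβ : 0 < β) (hm : 0 < m) (hy : y ∈ Icc m M) :
    LipschitzOnWith (M / (β * m * m) - m / (β * M * M)).toNNReal
      (shiftedSlope β (M / (β * m * m)) y) (Icc m M) := by
  refine .of_dist_le_mul fun v hv w hw ↦ ?_
  have hcoeff := div_mul_mul_mem_Icc hβ hm hy hv hw
  rw [Real.dist_eq, Real.dist_eq, shiftedSlope_sub hβ.ne' (hm.trans_le hv.1).ne'
    (hm.trans_le hw.1).ne', abs_mul, abs_of_nonneg (sub_nonneg.2 hcoeff.2)]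
  gcongr
  exact (sub_le_sub_left hcoeff.1 _).trans (le_coe_toNNReal _)

lemma shiftedSlope_monotoneOn (hβ : 0 < β) (hm : 0 < m) (hy : y ∈ Icc m M) :
    MonotoneOn (shiftedSlope β (M / (β * m * m)) y) (Icc m M) := fun v hv w hw hvw ↦ by
  have hcoeff := div_mul_mul_mem_Icc hβ hm hy hw hv
  rw [← sub_nonneg, shiftedSlope_sub hβ.ne' (hm.trans_le hw.1).ne' (hm.trans_le hv.1).ne']
  exact mul_nonneg (sub_nonneg.2 hcoeff.2) (sub_nonneg.2 hvw)

lemma shiftedSlope_mapsTo (hβ : 0 < β) (hm : 0 < m) (hy : y ∈ Icc m M) :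
    MapsTo (shiftedSlope β (M / (β * m * m)) y) (Icc m M)
      (Icc (M / (β * m * m) * m) (M / (β * m * m) * M)) := by
  have hmM : m ≤ M := hy.1.trans hy.2
  refine (shiftedSlope_monotoneOn hβ hm hy).mapsTo_Icc.mono_right (Icc_subset_Icc ?_ ?_)
  · have : 0 ≤ (y / m - 1) / β :=
      div_nonneg (sub_nonneg.2 ((one_le_div hm).2 hy.1)) hβ.le
    exact le_add_of_nonneg_left this
  · have : (y / M - 1) / β ≤ 0 :=
      div_nonpos_of_nonpos_of_nonneg
        (sub_nonpos.2 ((div_le_one (hm.trans_le hmM)).2 hy.2)) hβ.le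
    exact add_le_of_nonpos_left this

end ShiftedSlope

/-- `v` is a velocity profile of `β φ'' + φ' = F(φ)`: a positive `P`-periodic function of the
position such that the solutions of `φ' = v(φ)` solve the second-order equation. -/
structure IsVelocityProfile (β : ℝ) (F : ℝ → ℝ) (P : ℝ) (v : ℝ → ℝ) : Prop where
  contDiff : ContDiff ℝ 1 v
  periodic : Function.Periodic v P
  pos : ∀ x, 0 < v x
  ode : ∀ x, β * v x * deriv v x + v x = F x

section VelocityProfile

variable {β P : ℝ} {F v : ℝ → ℝ}

lemma IsVelocityProfile.of_hasDerivAt (hβ : β ≠ 0) (hF : Continuous F)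
    (hper : Function.Periodic v P) (hpos : ∀ x, 0 < v x)
    (hderiv : ∀ x, HasDerivAt v ((F x / v x - 1) / β) x) : IsVelocityProfile β F P v where
  contDiff := by
    have hdiff : Differentiable ℝ v := fun x ↦ (hderiv x).differentiableAt
    refine contDiff_one_iff_deriv.2 ⟨hdiff, ?_⟩
    rw [funext fun x ↦ (hderiv x).deriv]
    exact ((hF.div hdiff.continuous fun x ↦ (hpos x).ne').sub continuous_const).div_const β
  periodic := hper
  pos := hpos
  ode x := by
    have := (hpos x).ne'
    rw [(hderiv x).deriv]
    field_simp
    ring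

lemma IsVelocityProfile.comp_neg (hv : IsVelocityProfile β F P v) :
    IsVelocityProfile (-β) (fun x ↦ F (-x)) P fun x ↦ v (-x) where
  contDiff := hv.contDiff.comp contDiff_neg
  periodic x := by simp only [neg_add', hv.periodic.sub_eq]
  pos x := hv.pos (-x)
  ode x := by
    rw [deriv_comp_neg, ← hv.ode (-x)]
    ring

theorem exists_isVelocityProfile_of_mem_Icc {m M : ℝ} (hβ : 0 < β) (hF : Continuous F)
    (hper : Function.Periodic F P) (hm : 0 < m) (hmem : ∀ x, F x ∈ Icc m M) :
    ∃ v, IsVelocityProfile β F P v := by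
  have hmM : m ≤ M := (hmem 0).1.trans (hmem 0).2
  have hM : 0 < M := hm.trans_le hmM
  have hcont : ContinuousOn (Function.uncurry fun x ↦ shiftedSlope β (M / (β * m * m)) (F x))
      (univ ×ˢ Icc m M) := by
    have hne : ∀ p ∈ (univ : Set ℝ) ×ˢ Icc m M, p.2 ≠ 0 := fun p hp ↦ (hm.trans_le hp.2.1).ne'
    simp only [Function.uncurry_def, shiftedSlope]
    fun_prop (disch := assumption)
  have hk : (M / (β * m * m) - m / (β * M * M)).toNNReal < M / (β * m * m) := by
    rw [Real.coe_toNNReal', max_lt_iff]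
    exact ⟨sub_lt_self _ (by positivity), by positivity⟩
  obtain ⟨v, hv_per, hv_mem, hv_deriv⟩ := exists_periodic_hasDerivAt_sub_mul hk hmM hcont
    (fun y ↦ hper.comp (shiftedSlope β (M / (β * m * m)) · y))
    (fun x ↦ shiftedSlope_mapsTo hβ hm (hmem x))
    (fun x ↦ shiftedSlope_lipschitzOnWith hβ hm (hmem x))
  exact ⟨v, .of_hasDerivAt hβ.ne' hF hv_per (fun x ↦ hm.trans_le (hv_mem x).1)
    fun x ↦ (hv_deriv x).congr_deriv (add_sub_cancel_right _ _)⟩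

theorem exists_isVelocityProfile_of_pos (hβ : 0 < β) (hF : Continuous F)
    (hper : Function.Periodic F P) (hP : P ≠ 0) (hpos : ∀ x, 0 < F x) :
    ∃ v, IsVelocityProfile β F P v := by
  obtain ⟨a, ha⟩ := exists_forall_ge_of_periodic hper hP hF
  obtain ⟨b, hb⟩ := exists_forall_le_of_periodic hper hP hF
  exact exists_isVelocityProfile_of_mem_Icc hβ hF hper (hpos a) fun x ↦ ⟨ha x, hb x⟩

theorem exists_isVelocityProfile (β : ℝ) (hF : ContDiff ℝ 1 F) (hper : Function.Periodic F P)
    (hP : P ≠ 0) (hpos : ∀ x, 0 < F x) : ∃ v, IsVelocityProfile β F P v := by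
  rcases lt_trichotomy β 0 with hβ | rfl | hβ
  · obtain ⟨v, hv⟩ := exists_isVelocityProfile_of_pos (F := fun x ↦ F (-x)) (P := P)
      (neg_pos.2 hβ) (hF.continuous.comp continuous_neg)
      (fun x ↦ by simp only [neg_add', hper.sub_eq]) hP fun x ↦ hpos (-x)
    exact ⟨fun x ↦ v (-x), by simpa only [neg_neg] using hv.comp_neg⟩
  · exact ⟨F, hF, hper, hpos, fun x ↦ by ring⟩
  · exact exists_isVelocityProfile_of_pos hβ hF.continuous hper hP hpos

end VelocityProfile

section TravelTime

/-- The time which a solution of `φ' = v(φ)` takes to travel from `0` to `x`. -/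
noncomputable def travelTime (v : ℝ → ℝ) (x : ℝ) : ℝ := ∫ s in 0..x, (v s)⁻¹

variable {v φ : ℝ → ℝ} {P : ℝ}

lemma hasDerivAt_travelTime (hv : Continuous v) (hpos : ∀ x, 0 < v x) (x : ℝ) :
    HasDerivAt (travelTime v) (v x)⁻¹ x :=
  ((hv.inv₀ fun s ↦ (hpos s).ne').integral_hasStrictDerivAt 0 x).hasDerivAt

lemma travelTime_strictMono (hv : Continuous v) (hpos : ∀ x, 0 < v x) :
    StrictMono (travelTime v) := by
  refine strictMono_of_deriv_pos fun x ↦ ?_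
  rw [(hasDerivAt_travelTime hv hpos x).deriv]
  exact inv_pos.2 (hpos x)

lemma travelTime_add_period (hv : Continuous v) (hpos : ∀ x, 0 < v x)
    (hper : Function.Periodic v P) (x : ℝ) :
    travelTime v (x + P) = travelTime v x + travelTime v P := by
  have hinv : Continuous fun s ↦ (v s)⁻¹ := hv.inv₀ fun s ↦ (hpos s).ne'
  simpa only [zero_add] using! (hper.comp Inv.inv).intervalIntegral_add_eq_add 0 x
    fun _ _ ↦ hinv.intervalIntegrable _ _

lemma travelTime_surjective (hv : Continuous v) (hpos : ∀ x, 0 < v x)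
    (hper : Function.Periodic v P) (hP : 0 < P) : Function.Surjective (travelTime v) := by
  have hinv : Continuous fun s ↦ (v s)⁻¹ := hv.inv₀ fun s ↦ (hpos s).ne'
  have hinv_per : Function.Periodic (fun s ↦ (v s)⁻¹) P := hper.comp Inv.inv
  have hinv_pos (s : ℝ) : 0 < (v s)⁻¹ := inv_pos.2 (hpos s)
  have hcont : Continuous (travelTime v) :=
    continuous_iff_continuousAt.2 fun x ↦ (hasDerivAt_travelTime hv hpos x).continuousAt
  exact hcont.surjective
    (hinv_per.tendsto_atTop_intervalIntegral_of_pos' (hinv.intervalIntegrable _ _) hinv_pos hP)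
    (hinv_per.tendsto_atBot_intervalIntegral_of_pos' (hinv.intervalIntegrable _ _) hinv_pos hP)

theorem exists_hasDerivAt_comp_of_periodic (hv : Continuous v) (hpos : ∀ x, 0 < v x)
    (hper : Function.Periodic v P) (hP : 0 < P) :
    ∃ φ : ℝ → ℝ, φ 0 = 0 ∧ ∀ t, HasDerivAt φ (v (φ t)) t := by
  let τ : ℝ ≃o ℝ := (travelTime_strictMono hv hpos).orderIsoOfSurjective _
    (travelTime_surjective hv hpos hper hP)
  have hτ0 : τ 0 = 0 := intervalIntegral.integral_same
  refine ⟨τ.symm, τ.symm_apply_eq.2 hτ0.symm, fun t ↦ ?_⟩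
  simpa only [inv_inv] using! HasDerivAt.of_local_left_inverse τ.symm.continuous.continuousAt
    (hasDerivAt_travelTime hv hpos (τ.symm t)) (inv_pos.2 (hpos _)).ne'
    (.of_forall τ.apply_symm_apply)

lemma travelTime_apply_eq_self (hv : Continuous v) (hpos : ∀ x, 0 < v x)
    (hφ : ∀ t, HasDerivAt φ (v (φ t)) t) (hφ0 : φ 0 = 0) (t : ℝ) : travelTime v (φ t) = t := by
  have hderiv (t : ℝ) : HasDerivAt (fun t ↦ travelTime v (φ t) - t) 0 t :=
    (((hasDerivAt_travelTime hv hpos (φ t)).comp t (hφ t)).sub (hasDerivAt_id t)).congr_deriv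
      (by rw [inv_mul_cancel₀ (hpos _).ne', sub_self])
  have hconst := is_const_of_deriv_eq_zero (fun t ↦ (hderiv t).differentiableAt)
    (fun t ↦ (hderiv t).deriv) t 0
  simpa [hφ0, travelTime, sub_eq_zero] using! hconst

lemma forall_add_eq_add_period_iff (hv : Continuous v) (hpos : ∀ x, 0 < v x)
    (hper : Function.Periodic v P) (hφ : ∀ t, HasDerivAt φ (v (φ t)) t) (hφ0 : φ 0 = 0) {T : ℝ} :
    (∀ t, φ (t + T) = φ t + P) ↔ T = travelTime v P := by
  have htime := travelTime_apply_eq_self hv hpos hφ hφ0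
  refine ⟨fun hT ↦ ?_, fun hT t ↦ (travelTime_strictMono hv hpos).injective ?_⟩
  · rw [← htime T, ← zero_add T, hT 0, hφ0, zero_add]
  · rw [htime, travelTime_add_period hv hpos hper, htime, hT]

end TravelTime

/-- `φ` is a running solution of minimal period `T` of `β φ'' + φ' = F(φ)`, advancing by `P` in
each period. -/
structure IsRunningSol (β : ℝ) (F : ℝ → ℝ) (P : ℝ) (φ : ℝ → ℝ) (T : ℝ) : Prop where
  contDiff : ContDiff ℝ 2 φ
  ode : ∀ t, β * deriv (deriv φ) t + deriv φ t = F (φ t)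
  period_pos : 0 < T
  add_period : ∀ t, φ (t + T) = φ t + P
  period_le : ∀ T', 0 < T' → (∀ t, φ (t + T') = φ t + P) → T ≤ T'

lemma isPendulumRunningSol_iff {β I T : ℝ} {φ : ℝ → ℝ} :
    IsPendulumRunningSol β I φ T ↔ IsRunningSol β (fun x ↦ I - sin x) (2 * π) φ T := by
  constructor
  · rintro ⟨hdiff, hode, hT, hadd, hmin⟩
    exact ⟨hdiff, fun t ↦ eq_sub_of_add_eq (hode t), hT, hadd, hmin⟩
  · rintro ⟨hdiff, hode, hT, hadd, hmin⟩
    exact ⟨hdiff, fun t ↦ add_eq_of_eq_sub (hode t), hT, hadd, hmin⟩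

section RunningSolution

variable {β P T : ℝ} {F v φ : ℝ → ℝ}

lemma IsRunningSol.deriv_periodic (hφ : IsRunningSol β F P φ T) :
    Function.Periodic (deriv φ) T := fun t ↦ by
  rw [← deriv_comp_add_const, funext hφ.add_period, deriv_add_const]

lemma IsRunningSol.hasDerivAt_velocityProfile_comp (hφ : IsRunningSol β F P φ T)
    (hv : IsVelocityProfile β F P v) (hF : ∀ x, F x ≠ 0) (t : ℝ) :
    HasDerivAt φ (v (φ t)) t := by
  have hφ_diff : Differentiable ℝ φ := hφ.contDiff.differentiable two_ne_zero
  have hφ'_diff : Differentiable ℝ (deriv φ) :=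
    (ContDiff.deriv' (n := 1) hφ.contDiff).differentiable one_ne_zero
  have hv_diff : Differentiable ℝ v := hv.contDiff.differentiable one_ne_zero
  set d : ℝ → ℝ := fun t ↦ deriv φ t - v (φ t) with hd
  have hd_per : Function.Periodic d T := fun t ↦ by
    simp only [hd, hφ.deriv_periodic t, hφ.add_period, hv.periodic (φ t)]
  have hd_deriv (t : ℝ) :
      deriv d t = deriv (deriv φ) t - deriv v (φ t) * deriv φ t :=
    ((hφ'_diff t).hasDerivAt.sub
      ((hv_diff (φ t)).hasDerivAt.comp t (hφ_diff t).hasDerivAt)).deriv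
  have hd_ode (t : ℝ) : β * v (φ t) * deriv d t = -F (φ t) * d t := by
    rw [hd_deriv]
    linear_combination v (φ t) * hφ.ode t - deriv φ t * hv.ode (φ t)
  have hd_crit (t : ℝ) (ht : deriv d t = 0) : d t = 0 := by
    have := hd_ode t
    rw [ht, mul_zero, eq_comm, mul_eq_zero] at this
    exact this.resolve_left (neg_ne_zero.2 (hF _))
  have hd_zero : d t = 0 := eq_zero_of_periodic_of_deriv_eq_zero_imp hd_per hφ.period_pos.ne'
    (hφ'_diff.continuous.sub (hv_diff.comp hφ_diff).continuous) hd_crit t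
  exact (hφ_diff t).hasDerivAt.congr_deriv (sub_eq_zero.1 hd_zero)

lemma contDiff_two_of_hasDerivAt_comp (hv : ContDiff ℝ 1 v)
    (hφ : ∀ t, HasDerivAt φ (v (φ t)) t) : ContDiff ℝ 2 φ := by
  have hφ_diff : Differentiable ℝ φ := fun t ↦ (hφ t).differentiableAt
  have hφ' : deriv φ = v ∘ φ := funext fun t ↦ (hφ t).deriv
  have hφ_one : ContDiff ℝ 1 φ :=
    contDiff_one_iff_deriv.2 ⟨hφ_diff, hφ' ▸ hv.continuous.comp hφ_diff.continuous⟩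
  exact (contDiff_succ_iff_deriv (n := 1)).2 ⟨hφ_diff, by simp, hφ' ▸ hv.comp hφ_one⟩

lemma IsVelocityProfile.isRunningSol (hv : IsVelocityProfile β F P v) (hP : 0 < P)
    (hφ : ∀ t, HasDerivAt φ (v (φ t)) t) (hφ0 : φ 0 = 0) :
    IsRunningSol β F P φ (travelTime v P) := by
  have hperiod {T : ℝ} := forall_add_eq_add_period_iff hv.contDiff.continuous hv.pos hv.periodic
    hφ hφ0 (T := T)
  refine ⟨contDiff_two_of_hasDerivAt_comp hv.contDiff hφ, fun t ↦ ?_, ?_, hperiod.2 rfl,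
    fun T' _ hT' ↦ (hperiod.1 hT').ge⟩
  · have hφ'' : HasDerivAt (fun t ↦ v (φ t)) (deriv v (φ t) * v (φ t)) t :=
      (hv.contDiff.differentiable one_ne_zero (φ t)).hasDerivAt.comp t (hφ t)
    rw [funext fun t ↦ (hφ t).deriv, hφ''.deriv, ← hv.ode (φ t)]
    ring
  · exact intervalIntegral.intervalIntegral_pos_of_pos
      ((hv.contDiff.continuous.inv₀ fun s ↦ (hv.pos s).ne').intervalIntegrable _ _)
      (fun s ↦ inv_pos.2 (hv.pos s)) hP

theorem pendulum_running_solution_general (β : ℝ) (hF : ContDiff ℝ 1 F)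
    (hper : Function.Periodic F P) (hP : 0 < P) (hpos : ∀ x, 0 < F x) :
    ∃ (φ₀ : ℝ → ℝ) (T₀ : ℝ),
      IsRunningSol β F P φ₀ T₀ ∧ (∀ t, 0 < deriv φ₀ t) ∧ φ₀ 0 = 0 ∧
      ∀ (φ : ℝ → ℝ) (T : ℝ), IsRunningSol β F P φ T → φ 0 = 0 → φ = φ₀ ∧ T = T₀ := by
  obtain ⟨v, hv⟩ := exists_isVelocityProfile β hF hper hP.ne' hpos
  have hv_cont : Continuous v := hv.contDiff.continuous
  obtain ⟨φ₀, hφ₀_zero, hφ₀⟩ :=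
    exists_hasDerivAt_comp_of_periodic hv_cont hv.pos hv.periodic hP
  refine ⟨φ₀, travelTime v P, hv.isRunningSol hP hφ₀ hφ₀_zero,
    fun t ↦ (hφ₀ t).deriv ▸ hv.pos _, hφ₀_zero, fun φ T hφ hφ_zero ↦ ?_⟩
  have hφ_deriv := hφ.hasDerivAt_velocityProfile_comp hv fun x ↦ (hpos x).ne'
  refine ⟨funext fun t ↦ (travelTime_strictMono hv_cont hv.pos).injective ?_,
    (forall_add_eq_add_period_iff hv_cont hv.pos hv.periodic hφ_deriv hφ_zero).1 hφ.add_period⟩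
  rw [travelTime_apply_eq_self hv_cont hv.pos hφ_deriv hφ_zero,
    travelTime_apply_eq_self hv_cont hv.pos hφ₀ hφ₀_zero]

end RunningSolution

/-- **(Damped driven pendulum.)** For `β ≥ 0` and `I > 1` the pendulum equation
`β φ'' + φ' + sin φ = I` possesses a running solution `φ₀` of some period `T₀ > 0`
with `φ₀' > 0` everywhere, uniquely determined by the phase condition `φ₀ 0 = 0`:
any running solution with positive derivative and value `0` at `t = 0` coincides
with `φ₀` and has the same period `T₀`. -/
theorem pendulum_running_solution (β I : ℝ) (hβ : 0 ≤ β) (hI : 1 < I) :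
    ∃ (φ₀ : ℝ → ℝ) (T₀ : ℝ),
      IsPendulumRunningSol β I φ₀ T₀ ∧ (∀ t : ℝ, 0 < deriv φ₀ t) ∧ φ₀ 0 = 0 ∧
      ∀ (φ : ℝ → ℝ) (T : ℝ),
        IsPendulumRunningSol β I φ T → (∀ t : ℝ, 0 < deriv φ t) → φ 0 = 0 →
        φ = φ₀ ∧ T = T₀ := by
  obtain ⟨φ₀, T₀, hφ₀, hpos, hzero, huniq⟩ := pendulum_running_solution_general β
    (F := fun x ↦ I - sin x) (by fun_prop) (sin_periodic.comp (I - ·)) two_pi_pos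
    fun x ↦ sub_pos.2 ((sin_le_one x).trans_lt hI)
  simp only [isPendulumRunningSol_iff]
  exact ⟨φ₀, T₀, hφ₀, hpos, hzero, fun φ T hφ _ ↦ huniq φ T hφ⟩
end
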